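/- Let m be a non-negative integer and let x > 0 be real. Then ∑_{n=1}^∞ σ_{2m+1/2}(n) n^{−1/2} e^{−2π√(2nx)} sin(π/4 − 2π√(2nx)) = ( 2π√x + (2m)!/(√2·(2πx)^{2m+1}) )·ζ(−1/2−2m) + (1/√2)·ζ(1/2)·ζ(−2m) + (√π·(2m)!/(2π)^{2m+3/2}) ∑_{n=1}^∞ σ_{2m+1/2}(n)·( (x−in)^{−(2m+1)} + (x+in)^{−(2m+1)} ). -/

import Mathlib

open Complex Finset
open scoped Real BigOperators Classical

/-- Generalized divisor sum `σ_r(n) = ∑_{d ∣ n} d^r` with real exponent. -/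
noncomputable def rsigma (r : ℝ) (n : ℕ) : ℝ := ∑ d ∈ n.divisors, (d : ℝ) ^ r

/-! ### Laplace transforms -/

open MeasureTheory Filter Topology in
theorem laplace_hasDerivAt (g : ℝ → ℂ)
    (hg : ∀ δ : ℝ, 0 < δ → IntegrableOn (fun t : ℝ => g t * cexp (-(δ : ℂ) * t)) (Set.Ioi 0))
    (z : ℂ) (hz : 0 < z.re) :
    HasDerivAt (fun w : ℂ => ∫ t in Set.Ioi (0 : ℝ), g t * cexp (-w * t))
      (∫ t in Set.Ioi (0 : ℝ), g t * (cexp (-z * t) * (-t))) z := by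
  have hz4 : 0 < z.re / 4 := by positivity
  have meas : ∀ w : ℂ, AEStronglyMeasurable (fun t : ℝ => g t * cexp (-w * t))
      (volume.restrict (Set.Ioi 0)) := by
    intro w
    have h1 := (hg 1 one_pos).aestronglyMeasurable
    have h2 : AEStronglyMeasurable (fun t : ℝ => cexp (-w * t + t))
      (volume.restrict (Set.Ioi 0)) := by
      apply Continuous.aestronglyMeasurable; fun_prop
    refine (h1.mul h2).congr (ae_of_all _ fun t => ?_)
    simp only [Pi.mul_apply]
    rw [mul_assoc, ← Complex.exp_add]
    congr 2; push_cast; ring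
  have nb : ∀ (w : ℂ) (t : ℝ), ‖cexp (-w * t)‖ = Real.exp (-(w.re * t)) := by
    intro w t; rw [Complex.norm_exp]; simp
  have key := hasDerivAt_integral_of_dominated_loc_of_deriv_le (μ := volume.restrict (Set.Ioi (0:ℝ)))
    (F := fun (w : ℂ) (t : ℝ) => g t * cexp (-w * t))
    (F' := fun (w : ℂ) (t : ℝ) => g t * (cexp (-w * t) * (-t))) (x₀ := z)
    (s := Metric.ball z (z.re / 2))
    (bound := fun t => ‖g t * cexp (-((z.re / 4 : ℝ) : ℂ) * t)‖ * (4 / z.re))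
    (Metric.ball_mem_nhds _ (by positivity))
    (Eventually.of_forall meas)
    ?_ ?_ ?_ ?_ ?_
  · exact key.2
  · refine ((hg (z.re) hz).norm).mono' (meas z) (ae_of_all _ fun t => ?_)
    rw [norm_mul, norm_mul, nb, nb]; simp
  · have := (meas z).mul (show AEStronglyMeasurable (fun t : ℝ => -(t : ℂ))
      (volume.restrict (Set.Ioi 0)) from by
        apply Continuous.aestronglyMeasurable; fun_prop)
    refine this.congr (ae_of_all _ fun t => ?_)
    simp only [Pi.mul_apply]; ring
  · refine (ae_restrict_iff' measurableSet_Ioi).2 (ae_of_all _ fun t ht w hw => ?_)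
    have ht : 0 < t := ht
    rw [norm_mul, norm_mul, norm_mul, nb, nb, norm_neg, Complex.norm_real, Real.norm_of_nonneg ht.le,
      mul_assoc]
    refine mul_le_mul_of_nonneg_left ?_ (norm_nonneg _)
    have hw' : z.re / 2 ≤ w.re := by
      have h1 : |(w - z).re| ≤ ‖w - z‖ := Complex.abs_re_le_norm _
      have h2 : ‖w - z‖ < z.re / 2 := by simpa [dist_eq_norm] using hw
      have := (abs_le.1 (h1.trans h2.le)).1
      simp at this; linarith
    have h3 : t ≤ (4 / z.re) * Real.exp (z.re / 4 * t) := by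
      have := Real.add_one_le_exp (z.re / 4 * t)
      rw [div_mul_eq_mul_div, le_div_iff₀ hz]; linarith
    calc Real.exp (-(w.re * t)) * t ≤ Real.exp (-(z.re / 2 * t)) *
          ((4 / z.re) * Real.exp (z.re / 4 * t)) := by
          gcongr
      _ = Real.exp (-(z.re / 4 * t)) * (4 / z.re) := by
          rw [show -(z.re / 4 * t) = -(z.re / 2 * t) + z.re / 4 * t by ring, Real.exp_add]; ring
      _ = _ := by simp
  · exact ((hg _ hz4).norm).mul_const _
  · refine ae_of_all _ fun t w _ => ?_
    have h1 : HasDerivAt (fun w : ℂ => -w * (t : ℂ)) (-(t : ℂ)) w := by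
      simpa using ((hasDerivAt_id w).neg).mul_const (t : ℂ)
    exact (h1.cexp).const_mul (g t)

open MeasureTheory Filter Topology in
theorem laplace_ext (g : ℝ → ℂ)
    (hg : ∀ δ : ℝ, 0 < δ → IntegrableOn (fun t : ℝ => g t * cexp (-(δ : ℂ) * t)) (Set.Ioi 0))
    (H : ℂ → ℂ) (hH : DifferentiableOn ℂ H {z : ℂ | 0 < z.re})
    (heq : ∀ p : ℝ, 0 < p → ∫ t in Set.Ioi (0 : ℝ), g t * cexp (-(p : ℂ) * t) = H p)
    (z : ℂ) (hz : 0 < z.re) :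
    ∫ t in Set.Ioi (0 : ℝ), g t * cexp (-z * t) = H z := by
  have hopen : IsOpen {z : ℂ | 0 < z.re} := isOpen_lt continuous_const Complex.continuous_re
  have hconn : IsPreconnected {z : ℂ | 0 < z.re} := (convex_halfSpace_re_gt 0).isPreconnected
  have hL : DifferentiableOn ℂ (fun w : ℂ => ∫ t in Set.Ioi (0 : ℝ), g t * cexp (-w * t))
      {z : ℂ | 0 < z.re} := fun w hw =>
    (laplace_hasDerivAt g hg w hw).differentiableAt.differentiableWithinAt
  refine (hL.analyticOnNhd hopen).eqOn_of_preconnected_of_frequently_eq (hH.analyticOnNhd hopen)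
    hconn (z₀ := 1) (by simp) ?_ hz
  have ht : Tendsto (fun n : ℕ => ((1 + 1 / ((n : ℝ) + 1) : ℝ) : ℂ)) atTop (𝓝[≠] (1 : ℂ)) := by
    refine tendsto_nhdsWithin_iff.2 ⟨?_, Eventually.of_forall fun n => ?_⟩
    · have h := tendsto_one_div_add_atTop_nhds_zero_nat (𝕜 := ℝ)
      have h2 := (h.const_add 1)
      have h3 := (Complex.continuous_ofReal.tendsto _).comp h2
      rw [add_zero, ofReal_one] at h3
      exact h3
    · have : (1 + 1 / ((n : ℝ) + 1) : ℝ) ≠ 1 := by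
        have : (0:ℝ) < 1 / ((n : ℝ) + 1) := by positivity
        linarith
      intro h
      exact this (Complex.ofReal_injective ((Set.mem_singleton_iff.1 h).trans ofReal_one.symm))
  refine ht.frequently (Frequently.of_forall fun n => ?_)
  have := heq (1 + 1 / ((n : ℝ) + 1)) (by positivity)
  exact this


/-! ### Poisson summation on the half line -/

open MeasureTheory Filter Topology Asymptotics in
theorem poisson_half (g : ℝ → ℂ) (hgc : Continuous g) (hg0 : ∀ t ≤ 0, g t = 0) (N : ℕ)
    (hb : g =O[atTop] fun t : ℝ => t ^ (N : ℝ)) (δ : ℝ) (hδ : 0 < δ) (H : ℂ → ℂ)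
    (hH : ∀ z : ℂ, 0 < z.re → ∫ t in Set.Ioi (0 : ℝ), g t * cexp (-z * t) = H z)
    (hs : Summable fun k : ℤ => H (δ + 2 * π * k * I)) :
    ∑' n : ℕ, g (n + 1) * cexp (-(δ : ℂ) * ((n : ℂ) + 1)) = ∑' k : ℤ, H (δ + 2 * π * k * I) := by
  set f : ℝ → ℂ := fun t => g t * cexp (-(δ : ℂ) * t) with hf
  have hfc : Continuous f := by fun_prop
  have hdec : f =O[cocompact ℝ] fun x : ℝ => |x| ^ (-2 : ℝ) := by
    rw [cocompact_eq_atBot_atTop]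
    refine IsBigO.sup ?_ ?_
    · refine IsBigO.of_bound 1 ?_
      filter_upwards [eventually_le_atBot 0] with t ht
      simp only [hf, hg0 t ht]; simp; positivity
    · have h1 : (fun t : ℝ => cexp (-(δ : ℂ) * t)) =O[atTop] fun t : ℝ => t ^ (-(N : ℝ) - 2) := by
        refine IsBigO.trans (IsBigO.of_bound 1 ?_) (isLittleO_exp_neg_mul_rpow_atTop hδ _).isBigO
        filter_upwards with t
        rw [Complex.norm_exp]; simp
      refine (hb.mul h1).congr' (EventuallyEq.refl _ _) ?_
      filter_upwards [eventually_gt_atTop 0] with t ht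
      rw [abs_of_pos ht, ← Real.rpow_add ht]; congr 1; ring
  have hF : ∀ k : ℤ, FourierTransform.fourier f (k : ℝ) = H (δ + 2 * π * k * I) := by
    intro k
    rw [Real.fourier_real_eq_integral_exp_smul, ← hH _ (by simp [hδ])]
    rw [← integral_indicator measurableSet_Ioi]
    congr 1; ext t
    by_cases ht : t ∈ Set.Ioi (0 : ℝ)
    · rw [Set.indicator_of_mem ht, hf, smul_eq_mul, mul_left_comm, ← Complex.exp_add]
      congr 2; push_cast; ring
    · rw [Set.indicator_of_notMem ht, hf]
      simp [hg0 t (not_lt.1 ht)]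
  have key := Real.tsum_eq_tsum_fourier_of_rpow_decay_of_summable hfc one_lt_two hdec
    (by simp_rw [hF]; exact hs) 0
  simp_rw [hF] at key
  simp only [zero_add] at key
  have h2 : ∑' k : ℤ, H (δ + 2 * π * k * I) * fourier k ((0 : ℝ) : UnitAddCircle)
      = ∑' k : ℤ, H (δ + 2 * π * k * I) := by
    congr 1; ext k; simp
  rw [← h2, ← key]
  have hinj : Function.Injective (fun n : ℕ => (n : ℤ) + 1) := by
    intro a b h; simpa using h
  rw [← hinj.tsum_eq]
  · congr 1; ext n; simp only [hf]; push_cast; rfl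
  · intro k hk
    rw [Function.mem_support] at hk
    have hk0 : 0 < k := by
      by_contra h
      exact hk (by simp only [hf]; rw [hg0 _ (by exact_mod_cast not_lt.1 h)]; simp)
    exact ⟨(k - 1).toNat, by simp; omega⟩


/-! ### Two Laplace transforms -/

open MeasureTheory Filter Topology in
theorem glasser_aux (α β : ℝ) (hα : 0 < α) (hβ : 0 < β) :
    IntegrableOn (fun u : ℝ => Real.exp (-(α * u - β / u) ^ 2)) (Set.Ioi 0) ∧
    ∫ u in Set.Ioi (0 : ℝ), Real.exp (-(α * u - β / u) ^ 2) = √π / (2 * α) := by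
  set ψ : ℝ → ℝ := fun u => Real.exp (-(α * u - β / u) ^ 2) with hψ
  set φ : ℝ → ℝ := fun u => α * u - β / u with hφ
  have hder : ∀ u ∈ Set.Ioi (0 : ℝ), HasDerivWithinAt φ (α + β / u ^ 2) (Set.Ioi 0) u := by
    intro u hu
    have hu : 0 < u := hu
    have h1 : HasDerivAt (fun u : ℝ => α * u) α u := by
      simpa using (hasDerivAt_id u).const_mul α
    have h2 : HasDerivAt (fun u : ℝ => β / u) (-(β / u ^ 2)) u := by
      have := (hasDerivAt_inv hu.ne').const_mul β
      simp only [div_eq_mul_inv]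
      exact this.congr_deriv (by ring)
    have := (h1.sub h2).hasDerivWithinAt (s := Set.Ioi 0)
    simpa [hφ] using! this
  have hmono : StrictMonoOn φ (Set.Ioi 0) := by
    intro u hu v hv huv
    have hu : 0 < u := hu
    have : β / v < β / u := div_lt_div_of_pos_left hβ hu huv
    have : α * u < α * v := by gcongr
    simp only [hφ]; linarith
  have himg : φ '' Set.Ioi 0 = Set.univ := by
    refine Set.eq_univ_of_forall fun y => ?_
    have hs : |y| < √(y ^ 2 + 4 * α * β) := by
      rw [← Real.sqrt_sq_eq_abs]
      apply Real.sqrt_lt_sqrt (by positivity); nlinarith [mul_pos hα hβ]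
    have hpos : 0 < y + √(y ^ 2 + 4 * α * β) := by
      have := neg_abs_le y; linarith
    refine ⟨(y + √(y ^ 2 + 4 * α * β)) / (2 * α), by simp only [Set.mem_Ioi]; positivity, ?_⟩
    have hsq := Real.sq_sqrt (show 0 ≤ y ^ 2 + 4 * α * β by positivity)
    simp only [hφ]
    set r := √(y ^ 2 + 4 * α * β)
    field_simp
    nlinarith
  have hgi : Integrable (fun y : ℝ => Real.exp (-y ^ 2)) := by
    simpa using integrable_exp_neg_mul_sq (b := 1) one_pos
  have hI := (integrableOn_image_iff_integrableOn_abs_deriv_smul measurableSet_Ioi hder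
    hmono.injOn (fun y : ℝ => Real.exp (-y ^ 2))).1 (by rw [himg]; exact hgi.integrableOn)
  have hE := integral_image_eq_integral_abs_deriv_smul measurableSet_Ioi hder
    hmono.injOn (fun y : ℝ => Real.exp (-y ^ 2))
  have hG : ∫ y : ℝ, Real.exp (-y ^ 2) = √π := by
    simpa using integral_gaussian 1
  rw [himg, Measure.restrict_univ, hG] at hE
  have habs : ∀ u ∈ Set.Ioi (0 : ℝ), |α + β / u ^ 2| • Real.exp (-(φ u) ^ 2)
      = α * ψ u + β * (u ^ (-2 : ℝ) * ψ u) := by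
    intro u hu
    have hu : 0 < u := hu
    rw [abs_of_pos (by positivity), smul_eq_mul, Real.rpow_neg hu.le]
    simp only [hφ, hψ]
    norm_cast
    field_simp
  have hI' := hI.congr_fun habs measurableSet_Ioi
  rw [setIntegral_congr_fun measurableSet_Ioi habs] at hE
  have mψ : Measurable ψ := by simp only [hψ]; fun_prop
  have iψ : IntegrableOn ψ (Set.Ioi 0) := by
    refine Integrable.mono' (hI'.const_mul α⁻¹) mψ.aestronglyMeasurable ?_
    refine (ae_restrict_iff' measurableSet_Ioi).2 (ae_of_all _ fun u hu => ?_)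
    have hu : 0 < u := hu
    have h0 : 0 < ψ u := Real.exp_pos _
    rw [Real.norm_of_nonneg h0.le, mul_add, inv_mul_cancel_left₀ hα.ne']
    have : 0 < α⁻¹ * (β * (u ^ (-2 : ℝ) * ψ u)) := by positivity
    linarith
  have iψ2 : IntegrableOn (fun u => u ^ (-2 : ℝ) * ψ u) (Set.Ioi 0) := by
    have := (hI'.sub (iψ.const_mul α)).const_mul β⁻¹
    refine this.congr (ae_of_all _ fun u => ?_)
    simp only [Pi.sub_apply]
    field_simp; ring
  rw [integral_add (iψ.const_mul α) (iψ2.const_mul β), integral_const_mul, integral_const_mul] at hE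
  have hsub : ∫ u in Set.Ioi (0 : ℝ), u ^ (-2 : ℝ) * ψ u = (α / β) * ∫ u in Set.Ioi (0 : ℝ), ψ u := by
    have h1 := integral_comp_rpow_Ioi (fun y => ψ (β / α * y)) (p := -1) (by norm_num)
    rw [integral_comp_mul_left_Ioi ψ 0 (by positivity : 0 < β / α)] at h1
    simp only [mul_zero, inv_div, smul_eq_mul] at h1
    rw [← h1]
    refine setIntegral_congr_fun measurableSet_Ioi fun u hu => ?_
    have hu : 0 < u := hu
    simp only [abs_neg, abs_one, one_mul, Real.rpow_neg_one]
    norm_num only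
    congr 1
    simp only [hψ]
    congr 2
    field_simp
    ring
  rw [hsub] at hE
  refine ⟨iψ, ?_⟩
  rw [eq_div_iff (by positivity)]
  field_simp at hE
  linarith

open MeasureTheory Filter Topology in
theorem glasser_real (a p : ℝ) (ha : 0 < a) (hp : 0 < p) :
    IntegrableOn (fun t : ℝ => t ^ (-1 / 2 : ℝ) * Real.exp (-a / t) * Real.exp (-p * t)) (Set.Ioi 0) ∧
    ∫ t in Set.Ioi (0 : ℝ), t ^ (-1 / 2 : ℝ) * Real.exp (-a / t) * Real.exp (-p * t)
      = √π * p ^ (-1 / 2 : ℝ) * Real.exp (-2 * √a * √p) := by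
  obtain ⟨h1, h2⟩ := glasser_aux (√p) (√a) (by positivity) (by positivity)
  have hc : ∀ u ∈ Set.Ioi (0 : ℝ), (|(2 : ℝ)| * u ^ ((2 : ℝ) - 1)) •
      ((u ^ (2 : ℝ)) ^ (-1 / 2 : ℝ) * Real.exp (-a / u ^ (2 : ℝ)) * Real.exp (-p * u ^ (2 : ℝ)))
      = 2 * Real.exp (-2 * √a * √p) * Real.exp (-(√p * u - √a / u) ^ 2) := by
    intro u hu
    have hu : 0 < u := hu
    rw [← Real.rpow_mul hu.le]
    norm_num
    rw [Real.rpow_neg_one, mul_assoc, mul_assoc, mul_inv_cancel_left₀ hu.ne', ← Real.exp_add,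
      mul_assoc, ← Real.exp_add]
    congr 2
    have e1 := Real.sq_sqrt ha.le
    have e2 := Real.sq_sqrt hp.le
    have : (√p * u - √a / u) ^ 2 = p * u ^ 2 - 2 * (√a * √p) + a / u ^ 2 := by
      rw [← e1, ← e2]
      simp only [Real.sqrt_sq (Real.sqrt_nonneg _)]
      field_simp
      ring
    rw [this]; ring
  constructor
  · refine (integrableOn_Ioi_comp_rpow_iff _ (two_ne_zero)).1 ?_
    refine IntegrableOn.congr_fun (h1.const_mul _) (fun u hu => (hc u hu).symm) measurableSet_Ioi
  · rw [← integral_comp_rpow_Ioi _ (two_ne_zero), setIntegral_congr_fun measurableSet_Ioi hc,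
      integral_const_mul, h2]
    rw [show (-1 / 2 : ℝ) = -(1 / 2) by norm_num, Real.rpow_neg hp.le, ← Real.sqrt_eq_rpow]
    field_simp

theorem glasser_complex (a : ℝ) (ha : 0 < a) (z : ℂ) (hz : 0 < z.re) :
    ∫ t in Set.Ioi (0 : ℝ), ((t ^ (-1 / 2 : ℝ) * Real.exp (-a / t) : ℝ) : ℂ) * cexp (-z * t)
      = √π * z ^ (-1 / 2 : ℂ) * cexp (-2 * √a * z ^ (1 / 2 : ℂ)) := by
  refine laplace_ext (fun t : ℝ => ((t ^ (-1 / 2 : ℝ) * Real.exp (-a / t) : ℝ) : ℂ)) ?_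
    (fun z => √π * z ^ (-1 / 2 : ℂ) * cexp (-2 * √a * z ^ (1 / 2 : ℂ))) ?_ ?_ z hz
  · intro δ hδ
    have := (glasser_real a δ ha hδ).1.ofReal (𝕜 := ℂ)
    refine this.congr (MeasureTheory.ae_of_all _ fun t => ?_)
    simp
  · intro w hw
    have hw' : w ∈ Complex.slitPlane := Or.inl hw
    have h1 : DifferentiableAt ℂ (fun w : ℂ => w ^ (-1 / 2 : ℂ)) w :=
      differentiableAt_id.cpow_const hw'
    have h2 : DifferentiableAt ℂ (fun w : ℂ => w ^ (1 / 2 : ℂ)) w :=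
      differentiableAt_id.cpow_const hw'
    exact ((h1.const_mul _).mul (h2.const_mul _).cexp).differentiableWithinAt
  · intro p hp
    have := congrArg (fun r : ℝ => (r : ℂ)) (glasser_real a p ha hp).2
    beta_reduce at this
    rw [← integral_complex_ofReal] at this
    refine Eq.trans ?_ (this.trans ?_)
    · congr 1; ext t; push_cast; rfl
    · rw [Real.sqrt_eq_rpow p]
      push_cast [Complex.ofReal_cpow hp.le]
      rfl

open MeasureTheory in
theorem gamma_complex (p : ℝ) (hp : -1 < p) (z : ℂ) (hz : 0 < z.re) :
    ∫ t in Set.Ioi (0 : ℝ), ((t ^ p : ℝ) : ℂ) * cexp (-z * t)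
      = Real.Gamma (p + 1) * z ^ (-((p : ℂ) + 1)) := by
  refine laplace_ext (fun t : ℝ => ((t ^ p : ℝ) : ℂ)) ?_
    (fun z => Real.Gamma (p + 1) * z ^ (-((p : ℂ) + 1))) ?_ ?_ z hz
  · intro δ hδ
    have := (integrableOn_rpow_mul_exp_neg_mul_rpow hp one_pos hδ).ofReal (𝕜 := ℂ)
    refine this.congr (MeasureTheory.ae_of_all _ fun t => ?_)
    simp
  · intro w hw
    have hw' : w ∈ Complex.slitPlane := Or.inl hw
    have h1 : DifferentiableAt ℂ (fun w : ℂ => w ^ (-((p : ℂ) + 1))) w :=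
      differentiableAt_id.cpow_const hw'
    exact (h1.const_mul _).differentiableWithinAt
  · intro r hr
    have := congrArg (fun r : ℝ => (r : ℂ))
      (Real.integral_rpow_mul_exp_neg_mul_Ioi (a := p + 1) (by linarith) hr)
    beta_reduce at this
    rw [← integral_complex_ofReal] at this
    refine Eq.trans ?_ (this.trans ?_)
    · congr 1; ext t; simp
    · rw [one_div, Real.inv_rpow hr.le, ← Real.rpow_neg hr.le]
      push_cast [Complex.ofReal_cpow hr.le]
      ring


/-! ### Consequences of Poisson summation -/

/-- The point `δ + 2πiκ`. -/
noncomputable def zpt (δ κ : ℝ) : ℂ := (δ : ℂ) + 2 * π * κ * I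

noncomputable def TT (a δ κ : ℝ) : ℂ :=
  √π * (zpt δ κ) ^ (-1 / 2 : ℂ) * cexp (-2 * √a * (zpt δ κ) ^ (1 / 2 : ℂ))

theorem zpt_re (δ κ : ℝ) : (zpt δ κ).re = δ := by simp [zpt]

theorem zpt_im (δ κ : ℝ) : (zpt δ κ).im = 2 * π * κ := by simp [zpt]

theorem zpt_norm (δ κ : ℝ) : 2 * π * |κ| ≤ ‖zpt δ κ‖ := by
  have := Complex.abs_im_le_norm (zpt δ κ)
  rwa [zpt_im, abs_mul, abs_of_pos Real.two_pi_pos] at this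

theorem zpt_slit (δ κ : ℝ) (h : 0 < δ ∨ κ ≠ 0) : zpt δ κ ∈ Complex.slitPlane := by
  rcases h with h | h
  · left; rw [zpt_re]; exact h
  · right; rw [zpt_im]; have := Real.pi_pos; positivity

theorem zpt_tendsto (κ : ℝ) : Filter.Tendsto (fun δ => zpt δ κ) (nhdsWithin 0 (Set.Ioi 0))
    (nhds (zpt 0 κ)) := by
  have : Continuous (fun δ => zpt δ κ) := by unfold zpt; fun_prop
  exact this.continuousAt.tendsto.mono_left nhdsWithin_le_nhds

theorem re_sqrt_ge (z : ℂ) (hz : 0 ≤ z.re) : √(‖z‖ / 2) ≤ (z ^ (1 / 2 : ℂ)).re := by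
  rw [show (1 / 2 : ℂ) = ((1 / 2 : ℝ) : ℂ) by push_cast; rfl, Complex.cpow_ofReal_re,
    ← Real.sqrt_eq_rpow, Real.sqrt_div (norm_nonneg _)]
  have h1 : |z.arg| ≤ π / 2 := Complex.abs_arg_le_pi_div_two_iff.2 hz
  have h2 : Real.cos (π / 4) ≤ Real.cos (z.arg * (1 / 2)) := by
    rw [← Real.cos_abs (z.arg * (1 / 2))]
    apply Real.cos_le_cos_of_nonneg_of_le_pi (abs_nonneg _) (by linarith [Real.pi_pos])
    rw [abs_mul, abs_of_pos (by norm_num : (0:ℝ) < 1 / 2)]; linarith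
  rw [Real.cos_pi_div_four] at h2
  have h3 : 1 / √2 = √2 / 2 := by
    rw [div_eq_div_iff (by positivity) (by norm_num)]; simp
  rw [div_eq_mul_one_div, h3]
  gcongr

theorem TT_bound (a δ κ : ℝ) (ha : 0 ≤ a) (hδ : 0 ≤ δ) (hκ : 1 ≤ |κ|) :
    ‖TT a δ κ‖ ≤ |κ| ^ (-1 / 2 : ℝ) * Real.exp (-2 * √(π * a * |κ|)) := by
  have hπ := Real.pi_pos
  have h0 : 0 < |κ| := by linarith
  have hn := zpt_norm δ κ
  unfold TT
  rw [norm_mul, norm_mul, Complex.norm_exp, Complex.norm_real, Real.norm_of_nonneg (by positivity),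
    show (-1 / 2 : ℂ) = ((-1 / 2 : ℝ) : ℂ) by push_cast; rfl, Complex.norm_cpow_real]
  gcongr
  · calc √π * ‖zpt δ κ‖ ^ (-1 / 2 : ℝ) ≤ √π * (2 * π * |κ|) ^ (-1 / 2 : ℝ) := by
          gcongr √π * ?_
          exact Real.rpow_le_rpow_of_nonpos (by positivity) hn (by norm_num)
      _ = (√π * (2 * π) ^ (-1 / 2 : ℝ)) * |κ| ^ (-1 / 2 : ℝ) := by
          rw [Real.mul_rpow (by positivity) (by positivity)]; ring
      _ ≤ 1 * |κ| ^ (-1 / 2 : ℝ) := by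
          gcongr
          rw [show (-1 / 2 : ℝ) = -(1 / 2) by norm_num, Real.rpow_neg (by positivity),
            ← Real.sqrt_eq_rpow, ← div_eq_mul_inv, div_le_one (by positivity)]
          apply Real.sqrt_le_sqrt; linarith
      _ = _ := one_mul _
  · have h1 := re_sqrt_ge (zpt δ κ) (by rw [zpt_re]; exact hδ)
    have h2 : √(π * a * |κ|) ≤ √a * (zpt δ κ ^ (1 / 2 : ℂ)).re := by
      calc √(π * a * |κ|) = √a * √(π * |κ|) := by
            rw [← Real.sqrt_mul ha]; congr 1; ring
        _ ≤ √a * √(‖zpt δ κ‖ / 2) := by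
            gcongr; linarith
        _ ≤ _ := by gcongr
    have h3 : (-2 * (√a : ℂ) * zpt δ κ ^ (1 / 2 : ℂ)).re = -2 * (√a * (zpt δ κ ^ (1 / 2 : ℂ)).re) := by
      rw [show -2 * (√a : ℂ) * zpt δ κ ^ (1 / 2 : ℂ) = ((-2 * √a : ℝ) : ℂ) * zpt δ κ ^ (1 / 2 : ℂ) by
        push_cast; ring, Complex.re_ofReal_mul]; ring
    rw [h3]; linarith

theorem TT_tendsto (a κ : ℝ) (hκ : κ ≠ 0) : Filter.Tendsto (fun δ => TT a δ κ)
    (nhdsWithin 0 (Set.Ioi 0)) (nhds (TT a 0 κ)) := by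
  have hz := zpt_tendsto κ
  have hs := zpt_slit 0 κ (Or.inr hκ)
  have h1 := hz.cpow (tendsto_const_nhds (x := (-1 / 2 : ℂ))) hs
  have h2 := hz.cpow (tendsto_const_nhds (x := (1 / 2 : ℂ))) hs
  exact (h1.const_mul _).mul (h2.const_mul _).cexp

theorem exp_sqrt_le (c : ℝ) (hc : 0 < c) (N : ℕ) (y : ℝ) (hy : 0 < y) :
    Real.exp (-c * √y) ≤ ((2 * N).factorial / c ^ (2 * N)) / y ^ N := by
  have h := Real.pow_div_factorial_le_exp (x := c * √y) (by positivity) (2 * N)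
  rw [mul_pow, pow_mul (√y), Real.sq_sqrt hy.le] at h
  rw [neg_mul, Real.exp_neg, div_div, inv_le_comm₀ (Real.exp_pos _) (by positivity), inv_div]
  exact h

theorem summable_exp_sqrt (c : ℝ) (hc : 0 < c) (N : ℕ) :
    Summable fun n : ℕ => ((n : ℝ) + 1) ^ N * Real.exp (-c * √((n : ℝ) + 1)) := by
  have h1 : Summable fun n : ℕ => ((2 * (N + 2)).factorial / c ^ (2 * (N + 2))) *
      (1 / ((n : ℝ) + 1) ^ 2) := by
    apply Summable.mul_left
    have := (summable_nat_add_iff 1).2 (Real.summable_one_div_nat_pow.2 one_lt_two)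
    simpa using this
  refine Summable.of_nonneg_of_le (fun n => by positivity) (fun n => ?_) h1
  have := exp_sqrt_le c hc (N + 2) ((n : ℝ) + 1) (by positivity)
  calc _ ≤ ((n : ℝ) + 1) ^ N * (((2 * (N + 2)).factorial / c ^ (2 * (N + 2))) / ((n : ℝ) + 1) ^ (N + 2)) := by
        gcongr
    _ = _ := by rw [pow_add]; field_simp

theorem TT_bound' (a δ : ℝ) (ha : 0 ≤ a) (hδ : 0 ≤ δ) (n : ℕ) :
    ‖TT a δ ((n : ℝ) + 1)‖ ≤ ((n : ℝ) + 1) ^ (-1 / 2 : ℝ) * Real.exp (-(2 * √(π * a)) * √((n : ℝ) + 1)) ∧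
    ‖TT a δ (-((n : ℝ) + 1))‖ ≤ ((n : ℝ) + 1) ^ (-1 / 2 : ℝ) * Real.exp (-(2 * √(π * a)) * √((n : ℝ) + 1)) := by
  have h0 : (0 : ℝ) < (n : ℝ) + 1 := by positivity
  have h1 : (1 : ℝ) ≤ (n : ℝ) + 1 := by have : (0 : ℝ) ≤ n := by positivity
                                        linarith
  have e : -2 * √(π * a * ((n : ℝ) + 1)) = -(2 * √(π * a)) * √((n : ℝ) + 1) := by
    rw [Real.sqrt_mul (by have := Real.pi_pos; positivity)]; ring
  constructor
  · have := TT_bound a δ ((n : ℝ) + 1) ha hδ (by rw [abs_of_pos h0]; exact h1)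
    rwa [abs_of_pos h0, e] at this
  · have := TT_bound a δ (-((n : ℝ) + 1)) ha hδ (by rw [abs_neg, abs_of_pos h0]; exact h1)
    rwa [abs_neg, abs_of_pos h0, e] at this

theorem rpow_neg_le_one (n : ℕ) : ((n : ℝ) + 1) ^ (-1 / 2 : ℝ) ≤ 1 :=
  Real.rpow_le_one_of_one_le_of_nonpos (by have : (0 : ℝ) ≤ n := by positivity
                                           linarith) (by norm_num)

theorem TT_bound'' (a δ : ℝ) (ha : 0 ≤ a) (hδ : 0 ≤ δ) (n : ℕ) :
    ‖TT a δ ((n : ℝ) + 1)‖ ≤ Real.exp (-(2 * √(π * a)) * √((n : ℝ) + 1)) ∧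
    ‖TT a δ (-((n : ℝ) + 1))‖ ≤ Real.exp (-(2 * √(π * a)) * √((n : ℝ) + 1)) := by
  obtain ⟨h1, h2⟩ := TT_bound' a δ ha hδ n
  have := mul_le_of_le_one_left (Real.exp_pos (-(2 * √(π * a)) * √((n : ℝ) + 1))).le (rpow_neg_le_one n)
  exact ⟨h1.trans this, h2.trans this⟩

theorem TT_summable (a δ : ℝ) (ha : 0 < a) (hδ : 0 ≤ δ) :
    (Summable fun n : ℕ => TT a δ ((n : ℝ) + 1)) ∧ Summable fun n : ℕ => TT a δ (-((n : ℝ) + 1)) := by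
  have hs := summable_exp_sqrt (2 * √(π * a)) (by have := Real.pi_pos; positivity) 0
  simp only [pow_zero, one_mul] at hs
  exact ⟨Summable.of_norm_bounded hs fun n => (TT_bound'' a δ ha.le hδ n).1,
    Summable.of_norm_bounded hs fun n => (TT_bound'' a δ ha.le hδ n).2⟩

theorem zpt_int (δ : ℝ) (k : ℤ) : (δ : ℂ) + 2 * π * k * I = zpt δ (k : ℝ) := by
  simp [zpt]

/-- the glasser kernel extended by zero -/
noncomputable def gker (a t : ℝ) : ℝ := if t ≤ 0 then 0 else t ^ (-1 / 2 : ℝ) * Real.exp (-a / t)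

theorem gker_le (a t : ℝ) (ha : 0 < a) (ht : 0 < t) : |gker a t| ≤ √t / a := by
  rw [gker, if_neg (not_le.2 ht), abs_of_pos (by positivity)]
  have h1 : Real.exp (-a / t) ≤ t / a := by
    rw [neg_div, Real.exp_neg, inv_le_comm₀ (Real.exp_pos _) (by positivity), inv_div]
    have := Real.add_one_le_exp (a / t); linarith
  calc t ^ (-1 / 2 : ℝ) * Real.exp (-a / t) ≤ t ^ (-1 / 2 : ℝ) * (t / a) := by gcongr
    _ = (t ^ (-1 / 2 : ℝ) * t ^ (1 : ℝ)) / a := by rw [Real.rpow_one]; ring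
    _ = _ := by rw [← Real.rpow_add ht, Real.sqrt_eq_rpow]; norm_num

theorem gker_cont (a : ℝ) (ha : 0 < a) : Continuous (gker a) := by
  rw [continuous_iff_continuousAt]
  intro t
  rcases lt_trichotomy t 0 with h | h | h
  · refine (continuousAt_const (y := (0:ℝ))).congr ?_
    filter_upwards [eventually_lt_nhds h] with s hs
    rw [gker, if_pos hs.le]
  · subst h
    have h0 : gker a 0 = 0 := by simp [gker]
    rw [ContinuousAt, h0]
    refine squeeze_zero_norm (a := fun t => √t / a) (fun t => ?_) ?_
    · rcases le_or_gt t 0 with h | h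
      · rw [gker, if_pos h]; simp; positivity
      · exact gker_le a t ha h
    · have : Continuous fun t : ℝ => √t / a := by fun_prop
      simpa using this.tendsto 0
  · refine ContinuousAt.congr (f := fun t => t ^ (-1 / 2 : ℝ) * Real.exp (-a / t)) ?_ ?_
    · have h1 : ContinuousAt (fun t : ℝ => t ^ (-1 / 2 : ℝ)) t :=
        Real.continuousAt_rpow_const _ _ (Or.inl h.ne')
      have h2 : ContinuousAt (fun t : ℝ => -a / t) t := continuousAt_const.div continuousAt_id h.ne'
      exact h1.mul h2.rexp
    · filter_upwards [eventually_gt_nhds h] with s hs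
      rw [gker, if_neg (not_le.2 hs)]

open MeasureTheory Filter Topology Asymptotics in
theorem poisson_glasser (a δ : ℝ) (ha : 0 < a) (hδ : 0 < δ) :
    ∑' n : ℕ, ((((n : ℝ) + 1) ^ (-1 / 2 : ℝ) * Real.exp (-a / ((n : ℝ) + 1)) : ℝ) : ℂ) *
      cexp (-(δ : ℂ) * ((n : ℂ) + 1))
    = ∑' n : ℕ, (TT a δ ((n : ℝ) + 1) + TT a δ (-((n : ℝ) + 1))) + TT a δ 0 := by
  obtain ⟨s1, s2⟩ := TT_summable a δ ha hδ.le
  have hh := HasSum.of_add_one_of_neg_add_one (f := fun k : ℤ => TT a δ k)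
    (by simpa using s1.hasSum) (by simpa using s2.hasSum)
  have key := poisson_half (fun t => (gker a t : ℂ)) (Complex.continuous_ofReal.comp (gker_cont a ha))
    (fun t ht => by simp [gker, ht]) 1 ?_ δ hδ
    (fun z => √π * z ^ (-1 / 2 : ℂ) * cexp (-2 * √a * z ^ (1 / 2 : ℂ))) ?_ ?_
  · simp only [zpt_int] at key
    have e2 : ∑' k : ℤ, TT a δ k = _ := hh.tsum_eq
    rw [s1.tsum_add s2]
    rw [show (∑' n : ℕ, TT a δ ((n : ℝ) + 1)) + (∑' n : ℕ, TT a δ (-((n : ℝ) + 1))) + TT a δ 0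
      = ∑' k : ℤ, TT a δ k from by rw [e2]; simp; ring]
    refine Eq.trans ?_ key
    congr 1; ext n
    have h0 : ¬ ((n : ℝ) + 1 ≤ 0) := not_le.2 (by positivity)
    rw [gker, if_neg h0]
  · refine IsBigO.of_bound (1 / a) ?_
    filter_upwards [eventually_ge_atTop 1] with t ht
    have := gker_le a t ha (by linarith)
    rw [Complex.norm_real, Real.norm_eq_abs]
    refine this.trans ?_
    have h3 : √t ≤ t := Real.sqrt_le_self_iff.2 (Or.inr ht) 
    simp only [Nat.cast_one, Real.rpow_one, Real.norm_eq_abs, abs_of_pos (by linarith : 0 < t)]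
    rw [div_eq_mul_inv, mul_comm, one_div]
    gcongr
  · intro z hz
    rw [← glasser_complex a ha z hz]
    refine setIntegral_congr_fun measurableSet_Ioi fun t ht => ?_
    simp only [gker, if_neg (not_le.2 (show 0 < t from ht))]
  · simp only [zpt_int]
    exact hh.summable

theorem cpow_zpt_bound (p δ κ : ℝ) (hp : 0 < p) (hκ : 1 ≤ |κ|) :
    ‖zpt δ κ ^ (-((p : ℂ) + 1))‖ ≤ |κ| ^ (-(p + 1)) := by
  have hπ := Real.pi_gt_three
  rw [show (-((p : ℂ) + 1)) = ((-(p + 1) : ℝ) : ℂ) by push_cast; ring, Complex.norm_cpow_real]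
  refine Real.rpow_le_rpow_of_nonpos (by linarith) ?_ (by linarith)
  refine le_trans ?_ (zpt_norm δ κ)
  nlinarith

theorem summable_rpow_add_one (p : ℝ) (hp : 0 < p) :
    Summable fun n : ℕ => ((n : ℝ) + 1) ^ (-(p + 1)) := by
  have := (summable_nat_add_iff 1).2 (Real.summable_nat_rpow (p := -(p + 1)) |>.2 (by linarith))
  simpa using this

theorem cpow_zpt_bound' (p δ : ℝ) (hp : 0 < p) (n : ℕ) :
    ‖zpt δ ((n : ℝ) + 1) ^ (-((p : ℂ) + 1))‖ ≤ ((n : ℝ) + 1) ^ (-(p + 1)) ∧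
    ‖zpt δ (-((n : ℝ) + 1)) ^ (-((p : ℂ) + 1))‖ ≤ ((n : ℝ) + 1) ^ (-(p + 1)) := by
  have h0 : (0 : ℝ) < (n : ℝ) + 1 := by positivity
  have h1 : (1 : ℝ) ≤ (n : ℝ) + 1 := by have : (0 : ℝ) ≤ n := by positivity
                                        linarith
  constructor
  · have := cpow_zpt_bound p δ ((n : ℝ) + 1) hp (by rw [abs_of_pos h0]; exact h1)
    rwa [abs_of_pos h0] at this
  · have := cpow_zpt_bound p δ (-((n : ℝ) + 1)) hp (by rw [abs_neg, abs_of_pos h0]; exact h1)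
    rwa [abs_neg, abs_of_pos h0] at this

open MeasureTheory Filter Topology Asymptotics in
theorem poisson_gamma (p δ : ℝ) (hp : 0 < p) (hδ : 0 < δ) :
    ∑' n : ℕ, ((((n : ℝ) + 1) ^ p : ℝ) : ℂ) * cexp (-(δ : ℂ) * ((n : ℂ) + 1))
    = ∑' n : ℕ, Real.Gamma (p + 1) * (zpt δ ((n : ℝ) + 1) ^ (-((p : ℂ) + 1)) +
        zpt δ (-((n : ℝ) + 1)) ^ (-((p : ℂ) + 1))) +
      Real.Gamma (p + 1) * (δ : ℂ) ^ (-((p : ℂ) + 1)) := by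
  have s1 : Summable fun n : ℕ => Real.Gamma (p + 1) * zpt δ ((n : ℝ) + 1) ^ (-((p : ℂ) + 1)) :=
    (Summable.of_norm_bounded (summable_rpow_add_one p hp)
      fun n => (cpow_zpt_bound' p δ hp n).1).mul_left _
  have s2 : Summable fun n : ℕ => Real.Gamma (p + 1) * zpt δ (-((n : ℝ) + 1)) ^ (-((p : ℂ) + 1)) :=
    (Summable.of_norm_bounded (summable_rpow_add_one p hp)
      fun n => (cpow_zpt_bound' p δ hp n).2).mul_left _
  have hh := HasSum.of_add_one_of_neg_add_one
    (f := fun k : ℤ => Real.Gamma (p + 1) * zpt δ k ^ (-((p : ℂ) + 1)))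
    (by simpa using s1.hasSum) (by simpa using s2.hasSum)
  have key := poisson_half (fun t => (((max t 0) ^ p : ℝ) : ℂ))
    (Complex.continuous_ofReal.comp ((continuous_id.max continuous_const).rpow_const
      (fun _ => Or.inr hp.le)))
    (fun t ht => by simp [max_eq_right ht, Real.zero_rpow hp.ne']) (Nat.ceil p) ?_ δ hδ
    (fun z => Real.Gamma (p + 1) * z ^ (-((p : ℂ) + 1))) ?_ ?_
  · simp only [zpt_int] at key
    simp only [mul_add]
    rw [s1.tsum_add s2]
    have e2 := hh.tsum_eq
    have e3 : zpt δ 0 = δ := by simp [zpt]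
    rw [← e3]
    refine Eq.trans ?_ (key.trans (e2.trans ?_))
    · congr 1; ext n
      rw [max_eq_left (by positivity), e3, ← mul_add]
    · simp; ring
  · refine IsBigO.of_bound 1 ?_
    filter_upwards [eventually_ge_atTop 1] with t ht
    rw [Complex.norm_real, Real.norm_eq_abs, max_eq_left (by linarith), abs_of_pos (by positivity),
      one_mul, Real.norm_of_nonneg (by positivity)]
    exact Real.rpow_le_rpow_of_exponent_le ht (Nat.le_ceil p)
  · intro z hz
    rw [← gamma_complex p (by linarith) z hz]
    refine setIntegral_congr_fun measurableSet_Ioi fun t ht => ?_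
    simp only [max_eq_left (show 0 < t from ht).le]
  · simp only [zpt_int]
    exact hh.summable


/-! ### Values of zeta as regularised sums -/

noncomputable def VV (n : ℕ) (s : ℂ) : ℂ :=
  (s - 1) * ((n : ℂ) + 1) ^ (-s) + ((n : ℂ) + 2) ^ (1 - s) - ((n : ℂ) + 1) ^ (1 - s)

theorem hasDerivAt_ofReal_cpow' (t : ℝ) (ht : 0 < t) (w : ℂ) :
    HasDerivAt (fun y : ℝ => (y : ℂ) ^ w) (w * (t : ℂ) ^ (w - 1)) t := by
  have h : HasDerivAt (fun y : ℂ => y ^ w) (w * (t : ℂ) ^ (w - 1) * 1) (t : ℂ) :=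
    (hasDerivAt_id (t : ℂ)).cpow_const (Or.inl (by simpa using ht))
  rw [mul_one] at h
  exact h.comp_ofReal

theorem VV_bound (n : ℕ) (s : ℂ) (hs : 1 / 4 ≤ s.re) :
    ‖VV n s‖ ≤ ‖s - 1‖ * ‖s‖ * ((n : ℝ) + 1) ^ (-(1 / 4 + 1) : ℝ) := by
  set x : ℝ := (n : ℝ) + 1 with hx
  have hx1 : 1 ≤ x := by have : (0 : ℝ) ≤ n := by positivity
                         linarith
  set C : ℝ := ‖s‖ * x ^ (-(1 / 4 + 1) : ℝ) with hC
  have hxn : ∀ t ∈ Set.Icc x (x + 1), ‖(t : ℂ) ^ (-s) - (x : ℂ) ^ (-s)‖ ≤ C := by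
    intro t ht
    have hseg := Convex.norm_image_sub_le_of_norm_hasDerivWithin_le (s := Set.Icc x (x + 1))
      (f := fun y : ℝ => (y : ℂ) ^ (-s)) (f' := fun y : ℝ => -s * (y : ℂ) ^ (-s - 1)) (C := C)
      (fun y hy => (hasDerivAt_ofReal_cpow' y (by linarith [hy.1]) (-s)).hasDerivWithinAt)
      (fun y hy => ?_) (convex_Icc _ _) (Set.left_mem_Icc.2 (by linarith)) ht
    · refine hseg.trans ?_
      have : ‖t - x‖ ≤ 1 := by
        rw [Real.norm_eq_abs, abs_of_nonneg (by linarith [ht.1])]; linarith [ht.2]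
      have hC0 : 0 ≤ C := by positivity
      nlinarith
    · have hy0 : 0 < y := by linarith [hy.1]
      rw [norm_mul, norm_neg, Complex.norm_cpow_eq_rpow_re_of_pos hy0]
      simp only [hC]
      gcongr
      calc y ^ ((-s - 1).re) ≤ y ^ (-(1 / 4 + 1) : ℝ) :=
            Real.rpow_le_rpow_of_exponent_le (by linarith [hy.1]) (by simp; linarith)
        _ ≤ _ := Real.rpow_le_rpow_of_nonpos (by linarith) hy.1 (by norm_num)
  have hseg := Convex.norm_image_sub_le_of_norm_hasDerivWithin_le (s := Set.Icc x (x + 1))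
      (f := fun y : ℝ => (y : ℂ) ^ (1 - s) - (1 - s) * (x : ℂ) ^ (-s) * y)
      (f' := fun y : ℝ => (1 - s) * (y : ℂ) ^ (1 - s - 1) - (1 - s) * (x : ℂ) ^ (-s))
      (C := ‖s - 1‖ * C)
      (fun y hy => ?_) (fun y hy => ?_) (convex_Icc _ _) (Set.left_mem_Icc.2 (by linarith))
      (Set.right_mem_Icc.2 (by linarith))
  · simp only [add_sub_cancel_left, norm_one, mul_one] at hseg
    rw [mul_assoc]
    refine le_trans (le_of_eq ?_) hseg
    congr 1
    simp only [VV, hx]; push_cast; ring_nf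
  · have h1 := hasDerivAt_ofReal_cpow' y (by linarith [hy.1]) (1 - s)
    have h2 : HasDerivAt (fun y : ℝ => (1 - s) * (x : ℂ) ^ (-s) * (y : ℂ)) ((1 - s) * (x : ℂ) ^ (-s)) y := by
      simpa using (Complex.ofRealCLM.hasDerivAt (x := y)).const_mul ((1 - s) * (x : ℂ) ^ (-s))
    exact (h1.sub h2).hasDerivWithinAt
  · rw [← mul_sub, norm_mul, norm_sub_rev 1 s, show 1 - s - 1 = -s by ring]
    gcongr
    exact hxn y hy

open Filter Topology in
theorem zeta_VV (s : ℂ) (hs : s ∈ Metric.ball (2 : ℂ) (7 / 4)) :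
    riemannZeta₁ s = 1 + ∑' n, VV n s := by
  have hre : ∀ s ∈ Metric.ball (2 : ℂ) (7 / 4), 1 / 4 ≤ s.re := by
    intro s hs
    have h1 := Complex.abs_re_le_norm (s - 2)
    have h2 : ‖s - 2‖ < 7 / 4 := by simpa [dist_eq_norm] using hs
    have := (abs_le.1 (h1.trans h2.le)).1
    simp at this; linarith
  have hb : ∀ n, ∀ s ∈ Metric.ball (2 : ℂ) (7 / 4),
      ‖VV n s‖ ≤ 20 * ((n : ℝ) + 1) ^ (-(1 / 4 + 1) : ℝ) := by
    intro n s hs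
    refine (VV_bound n s (hre s hs)).trans ?_
    have h2 : ‖s - 2‖ < 7 / 4 := by simpa [dist_eq_norm] using hs
    have h3 : ‖s‖ ≤ ‖s - 2‖ + 2 := by simpa using norm_add_le (s - 2) 2
    have h4 : ‖s - 1‖ ≤ ‖s - 2‖ + 1 := by
      have := norm_add_le (s - 2) 1
      rw [show s - 2 + 1 = s - 1 by ring] at this; simpa using this
    gcongr
    nlinarith [norm_nonneg s, norm_nonneg (s - 1)]
  have hsum := (summable_rpow_add_one (1 / 4) (by norm_num)).mul_left 20
  have hd : DifferentiableOn ℂ (fun s => ∑' n, VV n s) (Metric.ball (2 : ℂ) (7 / 4)) := by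
    refine differentiableOn_tsum_of_summable_norm hsum (fun n => ?_) Metric.isOpen_ball hb
    have h1 : ((n : ℂ) + 1) ≠ 0 := by exact_mod_cast Nat.succ_ne_zero n
    have h2 : ((n : ℂ) + 2) ≠ 0 := by exact_mod_cast Nat.succ_ne_zero (n + 1)
    unfold VV
    have d1 : Differentiable ℂ fun s : ℂ => ((n : ℂ) + 1) ^ (-s) :=
      (differentiable_neg).const_cpow (Or.inl h1)
    have d2 : Differentiable ℂ fun s : ℂ => ((n : ℂ) + 1) ^ (1 - s) :=
      ((differentiable_const _).sub differentiable_id).const_cpow (Or.inl h1)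
    have d3 : Differentiable ℂ fun s : ℂ => ((n : ℂ) + 2) ^ (1 - s) :=
      ((differentiable_const _).sub differentiable_id).const_cpow (Or.inl h2)
    exact ((((differentiable_id.sub_const 1).mul d1).add d3).sub d2).differentiableOn
  refine (differentiable_riemannZeta₁.differentiableOn.analyticOnNhd
    (Metric.isOpen_ball)).eqOn_of_preconnected_of_eventuallyEq
    ((hd.const_add 1).analyticOnNhd Metric.isOpen_ball) (convex_ball _ _).isPreconnected
    (z₀ := 2) (by simp) ?_ hs
  have hev : ∀ᶠ s : ℂ in 𝓝 2, 1 < s.re :=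
    (Complex.continuous_re.tendsto 2).eventually (lt_mem_nhds (by norm_num))
  filter_upwards [hev, Metric.ball_mem_nhds (2 : ℂ) (by norm_num : (0:ℝ) < 7 / 4)] with s h1 hsb
  have hs1 : s ≠ 1 := by rintro rfl; simp at h1
  have hV : Summable fun n => VV n s := Summable.of_norm_bounded hsum fun n => hb n s hsb
  have hz : Summable fun n : ℕ => ((n : ℂ) + 1) ^ (-s) := by
    have := (summable_nat_add_iff 1).2 (Complex.summable_one_div_nat_cpow.2 h1)
    simpa [Complex.cpow_neg] using this
  have hW := hV.sub (hz.mul_left (s - 1))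
  have hWt : ∑' n, (VV n s - (s - 1) * ((n : ℂ) + 1) ^ (-s)) = -1 := by
    refine tendsto_nhds_unique hW.hasSum.tendsto_sum_nat ?_
    have e : ∀ N, ∑ n ∈ Finset.range N, (VV n s - (s - 1) * ((n : ℂ) + 1) ^ (-s))
        = (((N : ℝ) + 1 : ℝ) : ℂ) ^ (1 - s) - 1 := by
      intro N
      induction N with
      | zero => simp
      | succ N ih =>
        rw [Finset.sum_range_succ, ih, VV]
        push_cast; ring_nf
    simp_rw [e]
    have : Tendsto (fun N : ℕ => (((N : ℝ) + 1 : ℝ) : ℂ) ^ (1 - s)) atTop (𝓝 0) := by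
      rw [tendsto_zero_iff_norm_tendsto_zero]
      have e2 : ∀ N : ℕ, ‖(((N : ℝ) + 1 : ℝ) : ℂ) ^ (1 - s)‖ = ((N : ℝ) + 1) ^ (-(s.re - 1)) := by
        intro N
        rw [Complex.norm_cpow_eq_rpow_re_of_pos (by positivity)]; simp
      simp_rw [e2]
      exact (tendsto_rpow_neg_atTop (by linarith)).comp
        (tendsto_atTop_add_const_right _ _ tendsto_natCast_atTop_atTop)
    simpa using this.sub_const 1
  have hsp : ∑' n, VV n s = -1 + (s - 1) * riemannZeta s := by
    rw [zeta_eq_tsum_one_div_nat_add_one_cpow h1, ← hWt, ← tsum_mul_left]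
    have e3 : ∀ n : ℕ, (s - 1) * (1 / ((n : ℂ) + 1) ^ s) = (s - 1) * ((n : ℂ) + 1) ^ (-s) := by
      intro n; rw [Complex.cpow_neg, one_div]
    simp_rw [e3]
    rw [hV.tsum_sub (hz.mul_left _)]; ring
  rw [hsp, riemannZeta_eq_inv_sub_mul hs1]
  field_simp [sub_ne_zero.2 hs1]
  ring

theorem VV_half_real (n : ℕ) : VV n (1 / 2) =
    ((-(1 / 2) * ((n : ℝ) + 1) ^ (-1 / 2 : ℝ) + √((n : ℝ) + 2) - √((n : ℝ) + 1) : ℝ) : ℂ) := by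
  unfold VV
  rw [Real.sqrt_eq_rpow, Real.sqrt_eq_rpow]
  push_cast [Complex.ofReal_cpow (show (0 : ℝ) ≤ (n : ℝ) + 1 by positivity),
    Complex.ofReal_cpow (show (0 : ℝ) ≤ (n : ℝ) + 2 by positivity)]
  norm_num

theorem zeta_half : (Summable fun n => VV n (1 / 2)) ∧
    riemannZeta (1 / 2) = -2 - 2 * ∑' n, VV n (1 / 2) := by
  constructor
  · refine Summable.of_norm_bounded ((summable_rpow_add_one (1 / 4) (by norm_num)).mul_left _)
      fun n => VV_bound n (1 / 2) (by norm_num)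
  · have h := zeta_VV (1 / 2) (by
      rw [Metric.mem_ball, dist_eq_norm, show (1 / 2 - 2 : ℂ) = ((-3 / 2 : ℝ) : ℂ) by push_cast; norm_num,
        Complex.norm_real]; norm_num)
    rw [riemannZeta_eq_inv_sub_mul (by norm_num), h]
    ring


/-! ### Regularised limits -/

noncomputable def FF (p δ : ℝ) : ℂ :=
  ∑' n : ℕ, ((((n : ℝ) + 1) ^ p : ℝ) : ℂ) * cexp (-(δ : ℂ) * ((n : ℂ) + 1))

theorem norm_cexp_neg (δ : ℝ) (n : ℕ) :
    ‖cexp (-(δ : ℂ) * ((n : ℂ) + 1))‖ = Real.exp (-δ * ((n : ℝ) + 1)) := by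
  rw [Complex.norm_exp]; simp

theorem summable_pow_exp (N : ℕ) (δ : ℝ) (hδ : 0 < δ) :
    Summable fun n : ℕ => ((n : ℝ) + 1) ^ N * Real.exp (-δ * ((n : ℝ) + 1)) := by
  have := (summable_nat_add_iff 1).2 (Real.summable_pow_mul_exp_neg_nat_mul N hδ)
  simpa using this

theorem FF_summable (p δ : ℝ) (hδ : 0 < δ) :
    Summable fun n : ℕ => ((((n : ℝ) + 1) ^ p : ℝ) : ℂ) * cexp (-(δ : ℂ) * ((n : ℂ) + 1)) := by
  refine Summable.of_norm_bounded (summable_pow_exp (Nat.ceil p) δ hδ) fun n => ?_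
  rw [norm_mul, norm_cexp_neg, Complex.norm_real, Real.norm_of_nonneg (by positivity)]
  gcongr
  rw [← Real.rpow_natCast]
  exact Real.rpow_le_rpow_of_exponent_le (by have : (0 : ℝ) ≤ n := by positivity
                                             linarith) (Nat.le_ceil p)

theorem zpt_zero_cpow (κ : ℝ) (hκ : 0 < κ) (w : ℝ) :
    zpt 0 κ ^ (-(w : ℂ)) + zpt 0 (-κ) ^ (-(w : ℂ)) =
      2 * (2 * π * κ : ℂ) ^ (-(w : ℂ)) * Complex.cos (π * w / 2) := by
  have hr : 0 < 2 * π * κ := by have := Real.pi_pos; positivity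
  have e1 : zpt 0 κ = ((2 * π * κ : ℝ) : ℂ) * I := by simp [zpt]
  have e2 : zpt 0 (-κ) = ((2 * π * κ : ℝ) : ℂ) * (-I) := by simp [zpt]
  have e3 : (2 * π * κ : ℂ) = ((2 * π * κ : ℝ) : ℂ) := by push_cast; rfl
  have hrc : ((2 * π * κ : ℝ) : ℂ) ≠ 0 := by exact_mod_cast hr.ne'
  rw [e1, e2, e3, Complex.cpow_def_of_ne_zero (mul_ne_zero hrc I_ne_zero),
    Complex.cpow_def_of_ne_zero (mul_ne_zero hrc (neg_ne_zero.2 I_ne_zero)),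
    Complex.cpow_def_of_ne_zero hrc, Complex.log_ofReal_mul hr I_ne_zero,
    Complex.log_ofReal_mul hr (neg_ne_zero.2 I_ne_zero), Complex.log_I, Complex.log_neg_I,
    Complex.ofReal_log hr.le, add_mul, add_mul, Complex.exp_add, Complex.exp_add, Complex.cos]
  have e4 : (π : ℂ) / 2 * I * -(w : ℂ) = -(π * w / 2) * I := by ring
  have e5 : -((π : ℂ) / 2) * I * -(w : ℂ) = (π * w / 2) * I := by ring
  rw [e4, e5]; ring

theorem zsum_zero (p : ℝ) (hp : 0 < p) :
    ∑' n : ℕ, Real.Gamma (p + 1) * (zpt 0 ((n : ℝ) + 1) ^ (-((p : ℂ) + 1)) +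
        zpt 0 (-((n : ℝ) + 1)) ^ (-((p : ℂ) + 1))) = riemannZeta (-p) := by
  have hfe := riemannZeta_one_sub (s := (p : ℂ) + 1) (fun n h => ?_) (fun h => ?_)
  · rw [show (1 : ℂ) - (p + 1) = -p by ring, zeta_eq_tsum_one_div_nat_add_one_cpow
      (s := (p : ℂ) + 1) (by simp [hp]), ← tsum_mul_left] at hfe
    rw [hfe]
    congr 1; ext n
    have e := zpt_zero_cpow ((n : ℝ) + 1) (by positivity) (p + 1)
    push_cast at e
    have hG : Complex.Gamma ((p : ℂ) + 1) = (Real.Gamma (p + 1) : ℂ) := by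
      rw [← Complex.Gamma_ofReal]; push_cast; rfl
    rw [e, hG]
    have h1 : (2 * π * ((n : ℂ) + 1)) ^ (-((p : ℂ) + 1)) =
        (2 * π : ℂ) ^ (-((p : ℂ) + 1)) * ((n : ℂ) + 1) ^ (-((p : ℂ) + 1)) := by
      have := Complex.mul_cpow_ofReal_nonneg (a := 2 * π) (b := (n : ℝ) + 1) Real.two_pi_pos.le
        (by positivity) (-((p : ℂ) + 1))
      push_cast at this; exact this
    rw [h1, Complex.cpow_neg ((n : ℂ) + 1)]
    push_cast
    ring
  · have := congrArg Complex.re h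
    simp at this
    have h2 : (0 : ℝ) ≤ n := by positivity
    linarith
  · have := congrArg Complex.re h
    simp at this
    linarith

open Filter Topology in
theorem FF_tendsto (p : ℝ) (hp : 0 < p) :
    Tendsto (fun δ : ℝ => FF p δ - Real.Gamma (p + 1) * (δ : ℂ) ^ (-((p : ℂ) + 1)))
      (𝓝[>] 0) (𝓝 (riemannZeta (-p))) := by
  rw [← zsum_zero p hp]
  have key : Tendsto (fun δ : ℝ => ∑' n : ℕ, Real.Gamma (p + 1) *
      (zpt δ ((n : ℝ) + 1) ^ (-((p : ℂ) + 1)) + zpt δ (-((n : ℝ) + 1)) ^ (-((p : ℂ) + 1))))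
      (𝓝[>] 0) (𝓝 (∑' n : ℕ, Real.Gamma (p + 1) * (zpt 0 ((n : ℝ) + 1) ^ (-((p : ℂ) + 1)) +
        zpt 0 (-((n : ℝ) + 1)) ^ (-((p : ℂ) + 1))))) := by
    refine tendsto_tsum_of_dominated_convergence
      (((summable_rpow_add_one p hp).mul_left 2).mul_left (Real.Gamma (p + 1))) (fun n => ?_) ?_
    · have h0 : ((n : ℝ) + 1) ≠ 0 := by positivity
      refine Tendsto.const_mul _ (Tendsto.add ?_ ?_)
      · exact (zpt_tendsto _).cpow tendsto_const_nhds (zpt_slit _ _ (Or.inr h0))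
      · exact (zpt_tendsto _).cpow tendsto_const_nhds (zpt_slit _ _ (Or.inr (neg_ne_zero.2 h0)))
    · filter_upwards with δ n
      obtain ⟨h1, h2⟩ := cpow_zpt_bound' p δ hp n
      have hG : 0 ≤ Real.Gamma (p + 1) := (Real.Gamma_pos_of_pos (by linarith)).le
      rw [norm_mul, Complex.norm_real, Real.norm_of_nonneg hG]
      gcongr
      refine (norm_add_le _ _).trans ?_
      linarith
  refine key.congr' ?_
  filter_upwards [self_mem_nhdsWithin] with δ hδ
  rw [FF, poisson_gamma p δ hp hδ]; ring

theorem FF_half_rel (δ : ℝ) (hδ : 0 < δ) :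
    FF (-1 / 2) δ = 2 * ((Real.exp δ - 1 : ℝ) * FF (1 / 2) δ - 1) -
      2 * ∑' n, VV n (1 / 2) * cexp (-(δ : ℂ) * ((n : ℂ) + 1)) := by
  have hF := FF_summable (1 / 2) δ hδ
  have hF1 := (summable_nat_add_iff 1).2 hF
  have e0 : FF (1 / 2) δ = cexp (-(δ : ℂ)) + ∑' n : ℕ,
      (((((n + 1 : ℕ) : ℝ) + 1) ^ (1 / 2 : ℝ) : ℝ) : ℂ) * cexp (-(δ : ℂ) * (((n + 1 : ℕ) : ℂ) + 1)) := by
    rw [FF, hF.tsum_eq_zero_add]; simp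
  have hV : Summable fun n => VV n (1 / 2) * cexp (-(δ : ℂ) * ((n : ℂ) + 1)) := by
    refine Summable.of_norm_bounded zeta_half.1.norm fun n => ?_
    rw [norm_mul, norm_cexp_neg]
    apply mul_le_of_le_one_right (norm_nonneg _)
    apply Real.exp_le_one_iff.2
    have : (0 : ℝ) ≤ n := by positivity
    nlinarith
  have e1 : FF (-1 / 2) δ = ∑' n : ℕ, (2 * (cexp δ *
      ((((((n + 1 : ℕ) : ℝ) + 1) ^ (1 / 2 : ℝ) : ℝ) : ℂ) * cexp (-(δ : ℂ) * (((n + 1 : ℕ) : ℂ) + 1)))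
      - ((((n : ℝ) + 1) ^ (1 / 2 : ℝ) : ℝ) : ℂ) * cexp (-(δ : ℂ) * ((n : ℂ) + 1)))
      - 2 * (VV n (1 / 2) * cexp (-(δ : ℂ) * ((n : ℂ) + 1)))) := by
    rw [FF]; congr 1; ext n
    rw [VV_half_real, Real.sqrt_eq_rpow, Real.sqrt_eq_rpow, mul_left_comm (cexp δ), ← Complex.exp_add,
      show (δ : ℂ) + -(δ : ℂ) * (((n + 1 : ℕ) : ℂ) + 1) = -(δ : ℂ) * ((n : ℂ) + 1) by push_cast; ring,
      show ((n + 1 : ℕ) : ℝ) + 1 = (n : ℝ) + 2 by push_cast; ring]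
    push_cast; ring
  rw [e1, (((hF1.mul_left _).sub hF).mul_left 2).tsum_sub (hV.mul_left 2), tsum_mul_left, tsum_mul_left,
    (hF1.mul_left _).tsum_sub hF, tsum_mul_left, ← FF]
  have e2 : cexp (δ : ℂ) * ∑' n : ℕ,
      (((((n + 1 : ℕ) : ℝ) + 1) ^ (1 / 2 : ℝ) : ℝ) : ℂ) * cexp (-(δ : ℂ) * (((n + 1 : ℕ) : ℂ) + 1))
      = cexp δ * FF (1 / 2) δ - 1 := by
    rw [e0, mul_add, ← Complex.exp_add]; simp
  rw [e2]; push_cast; ring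

open Filter Topology in
theorem FF_half_tendsto :
    Tendsto (fun δ : ℝ => FF (-1 / 2) δ - ((√π * δ ^ (-1 / 2 : ℝ) : ℝ) : ℂ))
      (𝓝[>] 0) (𝓝 (riemannZeta (1 / 2))) := by
  have hV : Tendsto (fun δ : ℝ => ∑' n, VV n (1 / 2) * cexp (-(δ : ℂ) * ((n : ℂ) + 1)))
      (𝓝[>] 0) (𝓝 (∑' n, VV n (1 / 2))) := by
    refine tendsto_tsum_of_dominated_convergence zeta_half.1.norm (fun n => ?_) ?_
    · have : Continuous fun δ : ℝ => VV n (1 / 2) * cexp (-(δ : ℂ) * ((n : ℂ) + 1)) := by fun_prop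
      have h := (this.tendsto 0).mono_left (nhdsWithin_le_nhds (s := Set.Ioi 0))
      simpa using h
    · filter_upwards [self_mem_nhdsWithin] with δ hδ n
      have hδ : 0 < δ := hδ
      rw [norm_mul, norm_cexp_neg]
      apply mul_le_of_le_one_right (norm_nonneg _)
      apply Real.exp_le_one_iff.2
      have : (0 : ℝ) ≤ n := by positivity
      nlinarith
  have hF := FF_tendsto (1 / 2) (by norm_num)
  have he : Tendsto (fun δ : ℝ => ((Real.exp δ - 1 : ℝ) : ℂ)) (𝓝[>] 0) (𝓝 0) := by
    have : Continuous fun δ : ℝ => ((Real.exp δ - 1 : ℝ) : ℂ) := by fun_prop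
    have h := (this.tendsto 0).mono_left (nhdsWithin_le_nhds (s := Set.Ioi 0))
    simpa using h
  have hr : Tendsto (fun δ : ℝ => ((√π * δ ^ (-3 / 2 : ℝ) * (Real.exp δ - 1 - δ) : ℝ) : ℂ))
      (𝓝[>] 0) (𝓝 0) := by
    have : Tendsto (fun δ : ℝ => √π * √δ) (𝓝[>] 0) (𝓝 0) := by
      have : Continuous fun δ : ℝ => √π * √δ := by fun_prop
      have h := (this.tendsto 0).mono_left (nhdsWithin_le_nhds (s := Set.Ioi 0))
      simpa using h
    refine squeeze_zero_norm' ?_ this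
    filter_upwards [Ioo_mem_nhdsGT (show (0:ℝ) < 1 by norm_num)] with δ hδ
    have h0 := hδ.1
    rw [Complex.norm_real, norm_mul, norm_mul, Real.norm_of_nonneg (by positivity),
      Real.norm_of_nonneg (by positivity), Real.norm_eq_abs, mul_assoc]
    have := Real.abs_exp_sub_one_sub_id_le (x := δ) (by rw [abs_of_pos h0]; exact hδ.2.le)
    gcongr
    calc δ ^ (-3 / 2 : ℝ) * |Real.exp δ - 1 - δ| ≤ δ ^ (-3 / 2 : ℝ) * δ ^ 2 := by gcongr
      _ = δ ^ (-3 / 2 : ℝ) * δ ^ (2 : ℝ) := by norm_cast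
      _ = √δ := by rw [← Real.rpow_add h0, Real.sqrt_eq_rpow]; norm_num
  have hall := (((he.mul hF).const_mul 2).add hr).sub (((hV.const_mul 2).const_add 2))
  rw [zeta_half.2]
  have hlim : (2 * (0 * riemannZeta (-((1 / 2 : ℝ) : ℂ))) + 0 - (2 + 2 * ∑' n, VV n (1 / 2))) =
      -2 - 2 * ∑' n, VV n (1 / 2) := by ring
  rw [hlim] at hall
  refine hall.congr' ?_
  filter_upwards [self_mem_nhdsWithin] with δ hδ
  have hδ : 0 < δ := hδ
  rw [FF_half_rel δ hδ]
  have hg : Real.Gamma (1 / 2 + 1) = √π / 2 := by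
    rw [Real.Gamma_add_one (by norm_num), Real.Gamma_one_half_eq]; ring
  have hc : (δ : ℂ) ^ (-(((1 / 2 : ℝ) : ℂ) + 1)) = ((δ ^ (-3 / 2 : ℝ) : ℝ) : ℂ) := by
    rw [Complex.ofReal_cpow hδ.le]; congr 1; push_cast; ring
  have hd : δ ^ (-1 / 2 : ℝ) = δ ^ (-3 / 2 : ℝ) * δ := by
    nth_rewrite 3 [← Real.rpow_one δ]
    rw [← Real.rpow_add hδ]; norm_num
  rw [hg, hc, hd]
  push_cast
  ring


/-! ### The function E -/

noncomputable def EE (a : ℝ) : ℂ := ∑' n : ℕ, (TT a 0 ((n : ℝ) + 1) + TT a 0 (-((n : ℝ) + 1)))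

noncomputable def bb (a : ℝ) (d : ℕ) : ℝ :=
  ((d : ℝ) + 1) ^ (-1 / 2 : ℝ) * (Real.exp (-a / ((d : ℝ) + 1)) - 1)

theorem bb_bound (a : ℝ) (ha : 0 ≤ a) (d : ℕ) : ‖bb a d‖ ≤ a * ((d : ℝ) + 1) ^ (-(1 / 2 + 1) : ℝ) := by
  have hd : (0 : ℝ) < (d : ℝ) + 1 := by positivity
  rw [bb, norm_mul, Real.norm_of_nonneg (by positivity), Real.norm_eq_abs]
  have h0 : 0 ≤ a / ((d : ℝ) + 1) := by positivity
  have h1 : |Real.exp (-a / ((d : ℝ) + 1)) - 1| ≤ a / ((d : ℝ) + 1) := by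
    rw [neg_div, abs_sub_comm, abs_of_nonneg (by
      have := Real.exp_le_one_iff.2 (show -(a / ((d : ℝ) + 1)) ≤ 0 by linarith)
      linarith)]
    have := Real.add_one_le_exp (-(a / ((d : ℝ) + 1)))
    linarith
  calc ((d : ℝ) + 1) ^ (-1 / 2 : ℝ) * |Real.exp (-a / ((d : ℝ) + 1)) - 1|
      ≤ ((d : ℝ) + 1) ^ (-1 / 2 : ℝ) * (a / ((d : ℝ) + 1)) := by gcongr
    _ = a * (((d : ℝ) + 1) ^ (-1 / 2 : ℝ) * ((d : ℝ) + 1) ^ (-1 : ℝ)) := by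
        rw [Real.rpow_neg_one]; ring
    _ = _ := by rw [← Real.rpow_add hd]; norm_num

theorem bb_summable (a : ℝ) (ha : 0 ≤ a) : Summable fun d => (bb a d : ℂ) :=
  Summable.of_norm_bounded ((summable_rpow_add_one (1 / 2) (by norm_num)).mul_left a)
    fun d => by rw [Complex.norm_real]; exact bb_bound a ha d

theorem TT_zero (a δ : ℝ) (hδ : 0 < δ) :
    TT a δ 0 = ((√π * δ ^ (-1 / 2 : ℝ) * Real.exp (-2 * √a * √δ) : ℝ) : ℂ) := by
  unfold TT zpt
  rw [Real.sqrt_eq_rpow δ]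
  push_cast [Complex.ofReal_cpow hδ.le]
  simp

open Filter Topology in
theorem TT_zero_tendsto (a : ℝ) (ha : 0 < a) :
    Tendsto (fun δ : ℝ => TT a δ 0 - ((√π * δ ^ (-1 / 2 : ℝ) : ℝ) : ℂ)) (𝓝[>] 0)
      (𝓝 ((-(2 * √(π * a)) : ℝ) : ℂ)) := by
  have hd : HasDerivAt (fun y : ℝ => Real.exp (-2 * √a * y)) (-2 * √a) 0 := by
    have := ((hasDerivAt_id (0 : ℝ)).const_mul (-2 * √a)).exp
    simpa using this
  have h1 := hd.tendsto_slope_zero_right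
  have h2 : Tendsto (fun δ : ℝ => √δ) (𝓝[>] 0) (𝓝[>] 0) := by
    refine tendsto_nhdsWithin_iff.2 ⟨?_, ?_⟩
    · have := (Real.continuous_sqrt.tendsto 0).mono_left (nhdsWithin_le_nhds (s := Set.Ioi 0))
      simpa using this
    · filter_upwards [self_mem_nhdsWithin] with δ hδ
      exact Real.sqrt_pos.2 hδ
  have h3 := ((h1.comp h2).const_mul (√π)).ofReal
  rw [Real.sqrt_mul Real.pi_pos.le, show -(2 * (√π * √a)) = √π * (-2 * √a) by ring]
  refine h3.congr' ?_
  filter_upwards [self_mem_nhdsWithin] with δ hδ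
  have hδ : 0 < δ := hδ
  rw [TT_zero a δ hδ, ← Complex.ofReal_sub]
  have : δ ^ (-1 / 2 : ℝ) = (√δ)⁻¹ := by
    rw [Real.sqrt_eq_rpow, ← Real.rpow_neg hδ.le]; norm_num
  rw [this]
  norm_cast
  simp only [Function.comp, smul_eq_mul, zero_add, mul_zero, Real.exp_zero]
  ring

open Filter Topology in
theorem EE_eq (a : ℝ) (ha : 0 < a) :
    EE a = riemannZeta (1 / 2) + ((2 * √(π * a) : ℝ) : ℂ) + ∑' d, (bb a d : ℂ) := by
  have hB : Tendsto (fun δ : ℝ => ∑' d, (bb a d : ℂ) * cexp (-(δ : ℂ) * ((d : ℂ) + 1)))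
      (𝓝[>] 0) (𝓝 (∑' d, (bb a d : ℂ))) := by
    refine tendsto_tsum_of_dominated_convergence (bb_summable a ha.le).norm (fun n => ?_) ?_
    · have : Continuous fun δ : ℝ => (bb a n : ℂ) * cexp (-(δ : ℂ) * ((n : ℂ) + 1)) := by fun_prop
      have h := (this.tendsto 0).mono_left (nhdsWithin_le_nhds (s := Set.Ioi 0))
      simpa using h
    · filter_upwards [self_mem_nhdsWithin] with δ hδ n
      have hδ : 0 < δ := hδ
      rw [norm_mul, norm_cexp_neg]
      apply mul_le_of_le_one_right (norm_nonneg _)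
      apply Real.exp_le_one_iff.2
      have : (0 : ℝ) ≤ n := by positivity
      nlinarith
  have hE : Tendsto (fun δ : ℝ => ∑' n : ℕ, (TT a δ ((n : ℝ) + 1) + TT a δ (-((n : ℝ) + 1))))
      (𝓝[>] 0) (𝓝 (EE a)) := by
    have hs := summable_exp_sqrt (2 * √(π * a)) (by have := Real.pi_pos; positivity) 0
    simp only [pow_zero, one_mul] at hs
    refine tendsto_tsum_of_dominated_convergence (hs.mul_left 2) (fun n => ?_) ?_
    · have h0 : ((n : ℝ) + 1) ≠ 0 := by positivity
      exact (TT_tendsto a _ h0).add (TT_tendsto a _ (neg_ne_zero.2 h0))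
    · filter_upwards [self_mem_nhdsWithin] with δ hδ n
      have hδ : 0 < δ := hδ
      obtain ⟨h1, h2⟩ := TT_bound'' a δ ha.le hδ.le n
      refine (norm_add_le _ _).trans ?_
      linarith
  have h := (FF_half_tendsto.sub (TT_zero_tendsto a ha)).add hB
  rw [show riemannZeta (1 / 2) + ((2 * √(π * a) : ℝ) : ℂ) = riemannZeta (1 / 2) -
    ((-(2 * √(π * a)) : ℝ) : ℂ) by push_cast; ring]
  refine tendsto_nhds_unique hE (h.congr' ?_)
  filter_upwards [self_mem_nhdsWithin] with δ hδ
  have hδ : 0 < δ := hδ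
  have hp := poisson_glasser a δ ha hδ
  have hsB : Summable fun d => (bb a d : ℂ) * cexp (-(δ : ℂ) * ((d : ℂ) + 1)) := by
    refine Summable.of_norm_bounded (bb_summable a ha.le).norm fun n => ?_
    rw [norm_mul, norm_cexp_neg]
    apply mul_le_of_le_one_right (norm_nonneg _)
    apply Real.exp_le_one_iff.2
    have : (0 : ℝ) ≤ n := by positivity
    nlinarith
  have : ∑' n : ℕ, ((((n : ℝ) + 1) ^ (-1 / 2 : ℝ) * Real.exp (-a / ((n : ℝ) + 1)) : ℝ) : ℂ) *
      cexp (-(δ : ℂ) * ((n : ℂ) + 1)) =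
      ∑' d, (bb a d : ℂ) * cexp (-(δ : ℂ) * ((d : ℂ) + 1)) + FF (-1 / 2) δ := by
    rw [FF, ← hsB.tsum_add (FF_summable _ δ hδ)]
    congr 1; ext n; simp only [bb]; push_cast; ring
  rw [this] at hp
  linear_combination hp

/-! ### The remainder function R -/

noncomputable def rr (m : ℕ) (u : ℝ) (k : ℕ) : ℂ :=
  zpt u ((k : ℝ) + 1) ^ (-(2 * (m : ℤ) + 1)) + zpt u (-((k : ℝ) + 1)) ^ (-(2 * (m : ℤ) + 1))

noncomputable def RR (m : ℕ) (u : ℝ) : ℂ := ((2 * m).factorial : ℂ) * ∑' k, rr m u k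

theorem rr_zero (m k : ℕ) : rr m 0 k = 0 := by
  have h : zpt 0 (-((k : ℝ) + 1)) = - zpt 0 ((k : ℝ) + 1) := by simp [zpt]; ring
  rw [rr, h, Odd.neg_zpow (by exact ⟨-(m : ℤ) - 1, by ring⟩)]
  ring

theorem zpt_zpow_lip (m k : ℕ) (κ : ℝ) (hκ : |κ| = (k : ℝ) + 1) (u v : ℝ) :
    ‖zpt u κ ^ (-(2 * (m : ℤ) + 1)) - zpt v κ ^ (-(2 * (m : ℤ) + 1))‖ ≤
      (2 * m + 1) * (1 / ((k : ℝ) + 1) ^ 2) * |u - v| := by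
  have h0 : (1 : ℝ) ≤ (k : ℝ) + 1 := by
    have : (0 : ℝ) ≤ k := by positivity
    linarith
  have hn : ∀ y : ℝ, (k : ℝ) + 1 ≤ ‖zpt y κ‖ := by
    intro y
    have := zpt_norm y κ
    rw [hκ] at this
    nlinarith [Real.pi_gt_three]
  have hseg := Convex.norm_image_sub_le_of_norm_hasDerivWithin_le (s := Set.univ)
      (f := fun y : ℝ => zpt y κ ^ (-(2 * (m : ℤ) + 1)))
      (f' := fun y : ℝ => ((-(2 * (m : ℤ) + 1) : ℤ) : ℂ) * zpt y κ ^ (-(2 * (m : ℤ) + 1) - 1))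
      (C := (2 * m + 1) * (1 / ((k : ℝ) + 1) ^ 2)) (x := v) (y := u)
      (fun y _ => ?_) (fun y _ => ?_) convex_univ (Set.mem_univ _) (Set.mem_univ _)
  · simpa [Real.norm_eq_abs] using hseg
  · have hne : zpt y κ ≠ 0 := by
      rw [← norm_pos_iff]; linarith [hn y]
    have h1 := hasDerivAt_zpow (-(2 * (m : ℤ) + 1)) (zpt y κ) (Or.inl hne)
    have h2 : HasDerivAt (fun y : ℂ => y + 2 * π * κ * I) 1 (y : ℂ) :=
      (hasDerivAt_id _).add_const _
    have h3 := HasDerivAt.comp (y : ℂ) (h₂ := fun x : ℂ => x ^ (-(2 * (m : ℤ) + 1))) h1 h2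
    rw [mul_one] at h3
    exact h3.comp_ofReal.hasDerivWithinAt
  · rw [norm_mul, norm_zpow]
    have e1 : ‖((-(2 * (m : ℤ) + 1) : ℤ) : ℂ)‖ = 2 * m + 1 := by
      rw [Complex.norm_intCast]; push_cast; rw [abs_neg, abs_of_nonneg (by positivity)]
    rw [e1]
    gcongr
    have e2 : (-(2 * (m : ℤ) + 1) - 1) = -((2 * m + 2 : ℕ) : ℤ) := by push_cast; ring
    rw [e2, zpow_neg, zpow_natCast, one_div]
    gcongr
    calc ((k : ℝ) + 1) ^ 2 ≤ ((k : ℝ) + 1) ^ (2 * m + 2) := pow_le_pow_right₀ h0 (by omega)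
      _ ≤ _ := by gcongr; exact hn y

theorem rr_lip (m k : ℕ) (u v : ℝ) :
    ‖rr m u k - rr m v k‖ ≤ 2 * ((2 * m + 1) * (1 / ((k : ℝ) + 1) ^ 2) * |u - v|) := by
  have h0 : (0 : ℝ) < (k : ℝ) + 1 := by positivity
  have h1 := zpt_zpow_lip m k ((k : ℝ) + 1) (abs_of_pos h0) u v
  have h2 := zpt_zpow_lip m k (-((k : ℝ) + 1)) (by rw [abs_neg, abs_of_pos h0]) u v
  unfold rr
  rw [add_sub_add_comm]
  refine (norm_add_le _ _).trans ?_
  linarith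

theorem rr_bound (m k : ℕ) (u : ℝ) :
    ‖rr m u k‖ ≤ 2 * ((2 * m + 1) * (1 / ((k : ℝ) + 1) ^ 2) * |u|) := by
  simpa [rr_zero] using rr_lip m k u 0

theorem summable_inv_sq : Summable fun k : ℕ => 1 / ((k : ℝ) + 1) ^ 2 := by
  have := (summable_nat_add_iff 1).2 (Real.summable_one_div_nat_pow.2 one_lt_two)
  simpa using this

theorem rr_summable (m : ℕ) (u : ℝ) : Summable fun k => rr m u k :=
  Summable.of_norm_bounded (((summable_inv_sq.mul_left (2 * (m : ℝ) + 1)).mul_right |u|).mul_left 2)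
    fun k => rr_bound m k u

theorem RR_zero (m : ℕ) : RR m 0 = 0 := by simp [RR, rr_zero]

theorem RR_lip (m : ℕ) : ∃ C : ℝ, 0 ≤ C ∧ ∀ u v : ℝ, ‖RR m u - RR m v‖ ≤ C * |u - v| := by
  refine ⟨(2 * m).factorial * (2 * ((2 * m + 1) * ∑' k : ℕ, 1 / ((k : ℝ) + 1) ^ 2)), ?_, fun u v => ?_⟩
  · have : 0 ≤ ∑' k : ℕ, 1 / ((k : ℝ) + 1) ^ 2 := tsum_nonneg fun k => by positivity
    positivity
  · rw [RR, RR, ← mul_sub, ← (rr_summable m u).tsum_sub (rr_summable m v), norm_mul,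
      Complex.norm_natCast, mul_assoc]
    gcongr
    have hs := ((summable_inv_sq.mul_left (2 * (m : ℝ) + 1)).mul_right |u - v|).mul_left 2
    refine (tsum_of_norm_bounded hs.hasSum fun k => rr_lip m k u v).trans (le_of_eq ?_)
    rw [tsum_mul_left, tsum_mul_right, tsum_mul_left]; ring

theorem FF_nat (m : ℕ) (u : ℝ) (hu : 0 < u) :
    FF (2 * m : ℕ) u = ((2 * m).factorial : ℂ) * (u : ℂ) ^ (-(2 * (m : ℤ) + 1)) +
      riemannZeta (-2 * m) + RR m u := by
  rcases Nat.eq_zero_or_pos m with rfl | hm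
  · have hz : 0 < ((u / (2 * π) : ℝ) * I : ℂ).im := by
      rw [Complex.im_ofReal_mul, Complex.I_im, mul_one]; have := Real.pi_pos; positivity
    set z : UpperHalfPlane := ⟨(u / (2 * π) : ℝ) * I, hz⟩ with hzd
    have hzc : (z : ℂ) = (u / (2 * π) : ℝ) * I := rfl
    have h1 := pi_mul_cot_pi_q_exp z
    have h2 := cot_series_rep' (UpperHalfPlane.coe_mem_integerComplement z)
    have hpi : (π : ℂ) ≠ 0 := by exact_mod_cast Real.pi_ne_zero
    have huc : (u : ℂ) ≠ 0 := by exact_mod_cast hu.ne'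
    have he : cexp (2 * π * I * z) = cexp (-(u : ℂ)) := by
      congr 1; rw [hzc]; push_cast; field_simp; rw [I_sq]
    have hlt : ‖cexp (-(u : ℂ))‖ < 1 := by
      rw [Complex.norm_exp]; simp [hu]
    have hF : FF (2 * 0 : ℕ) u = ∑' n : ℕ, cexp (-(u : ℂ)) ^ (n + 1) := by
      rw [FF]; congr 1; ext n
      rw [← Complex.exp_nat_mul]
      simp; congr 1; ring
    have hg := (summable_geometric_of_norm_lt_one hlt).tsum_eq_zero_add
    rw [← hF] at hg
    rw [he, hg] at h1
    rw [h1] at h2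
    have h3 : ∑' k, rr 0 u k = I / (2 * π) * ∑' n : ℕ, (1 / ((z : ℂ) - (n + 1)) + 1 / ((z : ℂ) + (n + 1))) := by
      rw [← tsum_mul_left]; congr 1; ext n
      have e1 : zpt u ((n : ℝ) + 1) = -(2 * π * I) * ((z : ℂ) - (n + 1)) := by
        rw [hzc, zpt]; push_cast; field_simp; ring_nf; rw [I_sq]; ring
      have e2 : zpt u (-((n : ℝ) + 1)) = -(2 * π * I) * ((z : ℂ) + (n + 1)) := by
        rw [hzc, zpt]; push_cast; field_simp; ring_nf; rw [I_sq]; ring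
      have e3 : (-(2 * π * I) : ℂ)⁻¹ = I / (2 * π) := by
        rw [inv_eq_iff_eq_inv]; field_simp; rw [I_sq]; norm_num
      simp only [rr]
      rw [e1, e2]
      simp only [Nat.cast_zero, mul_zero, zero_add, zpow_neg, zpow_one]
      rw [mul_inv, mul_inv, e3]; ring
    rw [RR, h3, ← h2, hzc]
    simp only [Nat.cast_zero, mul_zero, zero_add, zpow_neg, zpow_one, riemannZeta_zero,
      Nat.factorial_zero, Nat.cast_one, one_mul, pow_zero]
    push_cast
    field_simp
    ring_nf
    rw [I_sq]
    ring
  · have hp : (0 : ℝ) < ((2 * m : ℕ) : ℝ) := by positivity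
    have h := poisson_gamma ((2 * m : ℕ) : ℝ) u hp hu
    obtain ⟨q, rfl⟩ : ∃ q, m = q + 1 := ⟨m - 1, by omega⟩
    have hz : riemannZeta (-2 * ((q + 1 : ℕ) : ℂ)) = 0 := by
      have := riemannZeta_neg_two_mul_nat_add_one q
      push_cast; exact this
    have hG : Real.Gamma (((2 * (q + 1) : ℕ) : ℝ) + 1) = ((2 * (q + 1)).factorial : ℝ) :=
      Real.Gamma_nat_eq_factorial _
    have hc : ∀ w : ℂ, w ^ (-((((2 * (q + 1) : ℕ) : ℝ) : ℂ) + 1)) = w ^ (-(2 * ((q + 1 : ℕ) : ℤ) + 1)) := by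
      intro w
      rw [← Complex.cpow_intCast]; congr 1; push_cast; ring
    rw [FF, h, hz, hG]
    simp_rw [hc]
    rw [tsum_mul_left, RR]
    simp only [rr]
    push_cast
    ring

/-! ### Bounds for E -/

theorem TT_bound_prod (c : ℝ) (hc : 0 < c) (t : ℝ) (ht : 1 ≤ t) (k : ℕ) :
    ‖TT (c * t) 0 ((k : ℝ) + 1)‖ ≤ Real.exp (-√(π * c) * √t) * Real.exp (-√(π * c) * √((k : ℝ) + 1)) ∧
    ‖TT (c * t) 0 (-((k : ℝ) + 1))‖ ≤
      Real.exp (-√(π * c) * √t) * Real.exp (-√(π * c) * √((k : ℝ) + 1)) := by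
  have hπ := Real.pi_pos
  obtain ⟨h1, h2⟩ := TT_bound'' (c * t) 0 (by positivity) le_rfl k
  have h : Real.exp (-(2 * √(π * (c * t))) * √((k : ℝ) + 1)) ≤
      Real.exp (-√(π * c) * √t) * Real.exp (-√(π * c) * √((k : ℝ) + 1)) := by
    rw [← Real.exp_add, ← mul_assoc, Real.sqrt_mul (by positivity)]
    apply Real.exp_le_exp.2
    have ht1 : 1 ≤ √t := by rw [Real.one_le_sqrt]; exact ht
    have hk1 : 1 ≤ √((k : ℝ) + 1) := by
      rw [Real.one_le_sqrt]; have : (0 : ℝ) ≤ k := by positivity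
      linarith
    have hb : 0 ≤ √(π * c) := by positivity
    have : √t + √((k : ℝ) + 1) ≤ 2 * (√t * √((k : ℝ) + 1)) := by nlinarith
    nlinarith
  exact ⟨h1.trans h, h2.trans h⟩

theorem EE_bound (c : ℝ) (hc : 0 < c) : ∃ K : ℝ, 0 ≤ K ∧ ∀ v : ℝ, 0 < v →
    ‖EE (c * v)‖ ≤ K * Real.exp (-√(π * c) * √v) := by
  have hπ := Real.pi_pos
  set b := √(π * c) with hb
  have hb0 : 0 < b := by positivity
  have hs := summable_exp_sqrt b hb0 0
  simp only [pow_zero, one_mul] at hs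
  set K1 : ℝ := 2 * ∑' k : ℕ, Real.exp (-b * √((k : ℝ) + 1)) with hK1
  have hK10 : 0 ≤ K1 := by
    have : 0 ≤ ∑' k : ℕ, Real.exp (-b * √((k : ℝ) + 1)) := tsum_nonneg fun k => by positivity
    positivity
  have hs2 := summable_rpow_add_one (1 / 2) (by norm_num)
  set C2 : ℝ := ∑' d : ℕ, ((d : ℝ) + 1) ^ (-(1 / 2 + 1) : ℝ) with hC2
  have hC20 : 0 ≤ C2 := tsum_nonneg fun d => by positivity
  set M : ℝ := ‖riemannZeta (1 / 2)‖ + 2 * b + c * C2 with hM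
  have hM0 : 0 ≤ M := by positivity
  refine ⟨K1 + M * Real.exp b, by positivity, fun v hv => ?_⟩
  rcases le_or_gt 1 v with h1 | h1
  · have : ‖EE (c * v)‖ ≤ K1 * Real.exp (-b * √v) := by
      refine (tsum_of_norm_bounded ((hs.mul_left (Real.exp (-b * √v))).mul_left 2).hasSum
        fun k => ?_).trans (le_of_eq ?_)
      · obtain ⟨e1, e2⟩ := TT_bound_prod c hc v h1 k
        refine (norm_add_le _ _).trans ?_
        linarith
      · rw [tsum_mul_left, tsum_mul_left]; ring
    refine this.trans ?_
    gcongr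
    have : 0 ≤ M * Real.exp b := by positivity
    linarith
  · have h2 : ‖EE (c * v)‖ ≤ M := by
      rw [EE_eq (c * v) (by positivity)]
      refine (norm_add_le _ _).trans (add_le_add ((norm_add_le _ _).trans (add_le_add le_rfl ?_)) ?_)
      · rw [Complex.norm_real, Real.norm_of_nonneg (by positivity)]
        refine mul_le_mul_of_nonneg_left (Real.sqrt_le_sqrt ?_) (by norm_num)
        have : c * v ≤ c := by nlinarith
        gcongr
      · refine (tsum_of_norm_bounded (hs2.mul_left (c * v)).hasSum fun d => ?_).trans ?_
        · rw [Complex.norm_real]; exact bb_bound _ (by positivity) d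
        · rw [tsum_mul_left]
          have : c * v ≤ c := by nlinarith
          gcongr
    have h3 : 1 ≤ Real.exp b * Real.exp (-b * √v) := by
      rw [← Real.exp_add]
      apply Real.one_le_exp
      have : √v ≤ 1 := Real.sqrt_le_one.2 h1.le
      nlinarith
    calc ‖EE (c * v)‖ ≤ M := h2
      _ ≤ M * (Real.exp b * Real.exp (-b * √v)) := le_mul_of_one_le_right hM0 h3
      _ ≤ K1 * Real.exp (-b * √v) + M * (Real.exp b * Real.exp (-b * √v)) := by
          have : 0 ≤ K1 * Real.exp (-b * √v) := by positivity
          linarith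
      _ = _ := by ring

open MeasureTheory in
theorem TT_cont (c κ : ℝ) : Continuous fun v : ℝ => TT (c * v) 0 κ := by
  unfold TT; fun_prop

open MeasureTheory Filter Topology in
theorem EE_meas (c : ℝ) (hc : 0 < c) :
    AEStronglyMeasurable (fun v : ℝ => EE (c * v)) (volume.restrict (Set.Ioi 0)) := by
  refine aestronglyMeasurable_of_tendsto_ae atTop
    (f := fun (N : ℕ) (v : ℝ) => ∑ n ∈ Finset.range N, (TT (c * v) 0 ((n : ℝ) + 1) + TT (c * v) 0 (-((n : ℝ) + 1))))
    (fun N => ?_) ?_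
  · apply Continuous.aestronglyMeasurable
    exact continuous_finsetSum _ fun n _ => (TT_cont c _).add (TT_cont c _)
  · refine (ae_restrict_iff' measurableSet_Ioi).2 (ae_of_all _ fun v hv => ?_)
    have hv : 0 < v := hv
    obtain ⟨s1, s2⟩ := TT_summable (c * v) 0 (by positivity) le_rfl
    exact (s1.add s2).hasSum.tendsto_sum_nat

open MeasureTheory in
theorem EE_integrable (c : ℝ) (hc : 0 < c) (N : ℕ) :
    IntegrableOn (fun v : ℝ => ((v ^ (N : ℝ) : ℝ) : ℂ) * EE (c * v)) (Set.Ioi 0) := by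
  have hπ := Real.pi_pos
  obtain ⟨K, hK, hb⟩ := EE_bound c hc
  have hi := (integrableOn_rpow_mul_exp_neg_mul_rpow (s := N) (p := 1 / 2) (b := √(π * c))
    (by have : (0 : ℝ) ≤ N := by positivity
        linarith) (by norm_num) (by positivity)).const_mul K
  refine Integrable.mono' hi ?_ ?_
  · refine AEStronglyMeasurable.mul ?_ (EE_meas c hc)
    exact (Complex.continuous_ofReal.comp
      (Real.continuous_rpow_const (by positivity))).aestronglyMeasurable
  · refine (ae_restrict_iff' measurableSet_Ioi).2 (ae_of_all _ fun v hv => ?_)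
    have hv : 0 < v := hv
    rw [norm_mul, Complex.norm_real, Real.norm_of_nonneg (by positivity)]
    have := hb v hv
    rw [← Real.sqrt_eq_rpow]
    calc v ^ (N : ℝ) * ‖EE (c * v)‖ ≤ v ^ (N : ℝ) * (K * Real.exp (-√(π * c) * √v)) := by gcongr
      _ = _ := by ring

theorem EE_summable (c : ℝ) (hc : 0 < c) (N : ℕ) :
    Summable fun j : ℕ => (((((j : ℝ) + 1) ^ (N : ℝ) : ℝ)) : ℂ) * EE (c * ((j : ℝ) + 1)) := by
  have hπ := Real.pi_pos
  obtain ⟨K, hK, hb⟩ := EE_bound c hc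
  refine Summable.of_norm_bounded ((summable_exp_sqrt (√(π * c)) (by positivity) N).mul_left K)
    fun j => ?_
  rw [norm_mul, Complex.norm_real, Real.norm_of_nonneg (by positivity), Real.rpow_natCast]
  have := hb ((j : ℝ) + 1) (by positivity)
  calc ((j : ℝ) + 1) ^ N * ‖EE (c * ((j : ℝ) + 1))‖
      ≤ ((j : ℝ) + 1) ^ N * (K * Real.exp (-√(π * c) * √((j : ℝ) + 1))) := by gcongr
    _ = _ := by ring

/-! ### The exact identity at positive ε -/

theorem bb_weight (c ε t : ℝ) (d : ℕ) (N : ℕ) :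
    ((t ^ (N : ℝ) : ℝ) : ℂ) * cexp (-(ε : ℂ) * t) * (bb (c * t) d : ℂ) =
      ((((d : ℝ) + 1) ^ (-1 / 2 : ℝ) : ℝ) : ℂ) *
        (((t ^ (N : ℝ) : ℝ) : ℂ) * cexp (-((ε + c / ((d : ℝ) + 1) : ℝ) : ℂ) * t) -
          ((t ^ (N : ℝ) : ℝ) : ℂ) * cexp (-(ε : ℂ) * t)) := by
  have h : cexp (-((ε + c / ((d : ℝ) + 1) : ℝ) : ℂ) * t) =
      cexp (-(ε : ℂ) * t) * ((Real.exp (-(c * t) / ((d : ℝ) + 1)) : ℝ) : ℂ) := by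
    push_cast; rw [← Complex.exp_add]; congr 1; ring
  rw [h, bb]; push_cast; ring

theorem bb_weight_norm (c ε t : ℝ) (hc : 0 < c) (ht : 0 < t) (d : ℕ) (N : ℕ) :
    ‖((t ^ (N : ℝ) : ℝ) : ℂ) * cexp (-(ε : ℂ) * t) * (bb (c * t) d : ℂ)‖ ≤
      (c * (t ^ ((N + 1 : ℕ) : ℝ) * Real.exp (-ε * t))) * ((d : ℝ) + 1) ^ (-(1 / 2 + 1) : ℝ) := by
  rw [norm_mul, norm_mul, Complex.norm_real, Complex.norm_real, Real.norm_of_nonneg (by positivity),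
    Complex.norm_exp]
  have h1 := bb_bound (c * t) (by positivity) d
  have e1 : (-(ε : ℂ) * t).re = -ε * t := by simp
  have e2 : t ^ ((N + 1 : ℕ) : ℝ) = t ^ (N : ℝ) * t := by
    rw [Real.rpow_natCast, Real.rpow_natCast, pow_succ]
  rw [e1, e2]
  calc t ^ (N : ℝ) * Real.exp (-ε * t) * ‖bb (c * t) d‖
      ≤ t ^ (N : ℝ) * Real.exp (-ε * t) * (c * t * ((d : ℝ) + 1) ^ (-(1 / 2 + 1) : ℝ)) := by gcongr
    _ = _ := by ring

theorem sum_eps (N : ℕ) (c ε : ℝ) (hc : 0 < c) (hε : 0 < ε) :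
    (Summable fun d : ℕ => ((((d : ℝ) + 1) ^ (-1 / 2 : ℝ) : ℝ) : ℂ) *
      (FF N (ε + c / ((d : ℝ) + 1)) - FF N ε)) ∧
    ∑' j : ℕ, (((((j : ℝ) + 1) ^ (N : ℝ) : ℝ)) : ℂ) * EE (c * ((j : ℝ) + 1)) *
      cexp (-(ε : ℂ) * ((j : ℂ) + 1)) =
    riemannZeta (1 / 2) * FF N ε + ((2 * √(π * c) : ℝ) : ℂ) * FF (N + 1 / 2) ε +
    ∑' d : ℕ, ((((d : ℝ) + 1) ^ (-1 / 2 : ℝ) : ℝ) : ℂ) *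
      (FF N (ε + c / ((d : ℝ) + 1)) - FF N ε) := by
  have hπ := Real.pi_pos
  set G : ℕ × ℕ → ℂ := fun q => (((((q.1 : ℝ) + 1) ^ (N : ℝ) : ℝ)) : ℂ) *
      cexp (-(ε : ℂ) * (((q.1 : ℝ) + 1 : ℝ) : ℂ)) * (bb (c * ((q.1 : ℝ) + 1)) q.2 : ℂ) with hG
  have hGs : Summable G := by
    have h1 := (summable_pow_exp (N + 1) ε hε).mul_left c
    have h2 := summable_rpow_add_one (1 / 2) (by norm_num)
    have h3 := h1.mul_of_nonneg h2 (fun _ => by positivity) (fun _ => by positivity)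
    refine Summable.of_norm_bounded h3 fun q => ?_
    have := bb_weight_norm c ε ((q.1 : ℝ) + 1) hc (by positivity) q.2 N
    rw [Real.rpow_natCast _ (N + 1)] at this
    exact this
  have hGs' : Summable (Function.uncurry fun j d => G (j, d)) := hGs
  have hin : ∀ d : ℕ, ∑' j : ℕ, G (j, d) = ((((d : ℝ) + 1) ^ (-1 / 2 : ℝ) : ℝ) : ℂ) *
      (FF N (ε + c / ((d : ℝ) + 1)) - FF N ε) := by
    intro d
    simp only [hG, bb_weight]
    rw [tsum_mul_left, FF, FF, ← (FF_summable _ _ (by positivity)).tsum_sub (FF_summable _ _ hε)]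
    push_cast; rfl
  constructor
  · have := hGs'.prod_symm.prod
    refine this.congr fun d => ?_
    exact hin d
  · have hcomm : ∑' d, ∑' j, G (j, d) = ∑' j, ∑' d, G (j, d) := hGs'.tsum_comm
    simp_rw [hin] at hcomm
    rw [hcomm]
    have s1 := (FF_summable N ε hε).mul_left (riemannZeta (1 / 2))
    have s2 := (FF_summable (N + 1 / 2) ε hε).mul_left ((2 * √(π * c) : ℝ) : ℂ)
    have s3 : Summable fun j => ∑' d, G (j, d) := hGs.prod
    rw [FF, FF, ← tsum_mul_left, ← tsum_mul_left, ← s1.tsum_add s2, ← (s1.add s2).tsum_add s3]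
    congr 1; ext j
    have hj : (0 : ℝ) < (j : ℝ) + 1 := by positivity
    rw [EE_eq _ (by positivity)]
    simp only [hG]
    rw [tsum_mul_left]
    have e1 : √(π * (c * ((j : ℝ) + 1))) = √(π * c) * ((j : ℝ) + 1) ^ (1 / 2 : ℝ) := by
      rw [← mul_assoc, Real.sqrt_mul (by positivity), Real.sqrt_eq_rpow ((j : ℝ) + 1)]
    rw [e1, Real.rpow_add hj]
    push_cast
    ring

open MeasureTheory in
theorem gamma_integrable (p : ℝ) (hp : -1 < p) (δ : ℝ) (hδ : 0 < δ) :
    IntegrableOn (fun t : ℝ => ((t ^ p : ℝ) : ℂ) * cexp (-(δ : ℂ) * t)) (Set.Ioi 0) := by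
  have := (integrableOn_rpow_mul_exp_neg_mul_rpow hp one_pos hδ).ofReal (𝕜 := ℂ)
  refine this.congr (MeasureTheory.ae_of_all _ fun t => ?_)
  simp

open MeasureTheory in
theorem int_eps (N : ℕ) (c ε : ℝ) (hc : 0 < c) (hε : 0 < ε) :
    (Summable fun d : ℕ => ((((d : ℝ) + 1) ^ (-1 / 2 : ℝ) : ℝ) : ℂ) *
      (Real.Gamma ((N : ℝ) + 1) * ((ε + c / ((d : ℝ) + 1) : ℝ) : ℂ) ^ (-(((N : ℝ) : ℂ) + 1)) -
        Real.Gamma ((N : ℝ) + 1) * (ε : ℂ) ^ (-(((N : ℝ) : ℂ) + 1)))) ∧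
    ∫ v in Set.Ioi (0 : ℝ), ((v ^ (N : ℝ) : ℝ) : ℂ) * EE (c * v) * cexp (-(ε : ℂ) * v) =
    riemannZeta (1 / 2) * (Real.Gamma ((N : ℝ) + 1) * (ε : ℂ) ^ (-(((N : ℝ) : ℂ) + 1))) +
    ((2 * √(π * c) : ℝ) : ℂ) * (Real.Gamma ((N + 1 / 2 : ℝ) + 1) *
      (ε : ℂ) ^ (-(((N + 1 / 2 : ℝ) : ℂ) + 1))) +
    ∑' d : ℕ, ((((d : ℝ) + 1) ^ (-1 / 2 : ℝ) : ℝ) : ℂ) *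
      (Real.Gamma ((N : ℝ) + 1) * ((ε + c / ((d : ℝ) + 1) : ℝ) : ℂ) ^ (-(((N : ℝ) : ℂ) + 1)) -
        Real.Gamma ((N : ℝ) + 1) * (ε : ℂ) ^ (-(((N : ℝ) : ℂ) + 1))) := by
  have hπ := Real.pi_pos
  have hN : (-1 : ℝ) < N := by have : (0 : ℝ) ≤ N := by positivity
                               linarith
  have hN2 : (-1 : ℝ) < N + 1 / 2 := by linarith
  set G : ℕ → ℝ → ℂ := fun d v => ((v ^ (N : ℝ) : ℝ) : ℂ) * cexp (-(ε : ℂ) * v) *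
    (bb (c * v) d : ℂ) with hG
  have hGe : ∀ d, G d = fun v : ℝ => ((((d : ℝ) + 1) ^ (-1 / 2 : ℝ) : ℝ) : ℂ) *
        (((v ^ (N : ℝ) : ℝ) : ℂ) * cexp (-((ε + c / ((d : ℝ) + 1) : ℝ) : ℂ) * v) -
          ((v ^ (N : ℝ) : ℝ) : ℂ) * cexp (-(ε : ℂ) * v)) := by
    intro d; ext v; simp only [hG]; exact bb_weight c ε v d N
  have hGi : ∀ d, IntegrableOn (G d) (Set.Ioi 0) := by
    intro d
    rw [hGe]
    exact ((gamma_integrable N hN _ (by positivity)).sub (gamma_integrable N hN ε hε)).const_mul _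
  have hGint : ∀ d, ∫ v in Set.Ioi (0 : ℝ), G d v = ((((d : ℝ) + 1) ^ (-1 / 2 : ℝ) : ℝ) : ℂ) *
      (Real.Gamma ((N : ℝ) + 1) * ((ε + c / ((d : ℝ) + 1) : ℝ) : ℂ) ^ (-(((N : ℝ) : ℂ) + 1)) -
        Real.Gamma ((N : ℝ) + 1) * (ε : ℂ) ^ (-(((N : ℝ) : ℂ) + 1))) := by
    intro d
    have hpos : 0 < ε + c / ((d : ℝ) + 1) := by positivity
    rw [hGe, integral_const_mul, integral_sub (gamma_integrable N hN _ hpos)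
      (gamma_integrable N hN ε hε), gamma_complex N hN _ (by rw [Complex.ofReal_re]; exact hpos),
      gamma_complex N hN _ (by rw [Complex.ofReal_re]; exact hε)]
  have hmaj := (integrableOn_rpow_mul_exp_neg_mul_rpow (s := ((N + 1 : ℕ) : ℝ)) (p := 1)
    (by push_cast; linarith) one_pos hε).const_mul c
  simp only [Real.rpow_one] at hmaj
  set K : ℝ := ∫ v in Set.Ioi (0 : ℝ), c * (v ^ ((N + 1 : ℕ) : ℝ) * Real.exp (-ε * v)) with hK
  have hGn : ∀ d, ∫ v in Set.Ioi (0 : ℝ), ‖G d v‖ ≤ K * ((d : ℝ) + 1) ^ (-(1 / 2 + 1) : ℝ) := by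
    intro d
    rw [hK, ← integral_mul_const]
    refine setIntegral_mono_on (hGi d).norm (hmaj.mul_const _) measurableSet_Ioi fun v hv => ?_
    exact bb_weight_norm c ε v hc hv d N
  have hsum : Summable fun d => ∫ v in Set.Ioi (0 : ℝ), ‖G d v‖ :=
    Summable.of_nonneg_of_le (fun d => integral_nonneg fun v => norm_nonneg _) hGn
      ((summable_rpow_add_one (1 / 2) (by norm_num)).mul_left K)
  have hhs := hasSum_integral_of_summable_integral_norm hGi hsum
  simp_rw [hGint] at hhs
  refine ⟨hhs.summable, ?_⟩
  rw [hhs.tsum_eq]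
  have hcg : ∀ v ∈ Set.Ioi (0 : ℝ), ((v ^ (N : ℝ) : ℝ) : ℂ) * EE (c * v) * cexp (-(ε : ℂ) * v) =
      riemannZeta (1 / 2) * (((v ^ (N : ℝ) : ℝ) : ℂ) * cexp (-(ε : ℂ) * v)) +
      ((2 * √(π * c) : ℝ) : ℂ) * (((v ^ (N + 1 / 2 : ℝ) : ℝ) : ℂ) * cexp (-(ε : ℂ) * v)) +
      ∑' d, G d v := by
    intro v hv
    have hv : 0 < v := hv
    rw [EE_eq _ (by positivity)]
    simp only [hG]
    rw [tsum_mul_left]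
    have e1 : √(π * (c * v)) = √(π * c) * v ^ (1 / 2 : ℝ) := by
      rw [← mul_assoc, Real.sqrt_mul (by positivity), Real.sqrt_eq_rpow v]
    rw [e1, Real.rpow_add hv]
    push_cast
    ring
  have i1 := (gamma_integrable N hN ε hε).const_mul (riemannZeta (1 / 2))
  have i2 := (gamma_integrable (N + 1 / 2) hN2 ε hε).const_mul ((2 * √(π * c) : ℝ) : ℂ)
  have i0 : IntegrableOn (fun v : ℝ => ((v ^ (N : ℝ) : ℝ) : ℂ) * EE (c * v) * cexp (-(ε : ℂ) * v))
      (Set.Ioi 0) := by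
    refine (EE_integrable c hc N).norm.mono' ((EE_integrable c hc N).1.mul ?_) ?_
    · exact (by fun_prop : Continuous fun v : ℝ => cexp (-(ε : ℂ) * v)).aestronglyMeasurable
    · refine (ae_restrict_iff' measurableSet_Ioi).2 (ae_of_all _ fun v hv => ?_)
      have hv : 0 < v := hv
      rw [norm_mul]
      apply mul_le_of_le_one_right (norm_nonneg _)
      rw [Complex.norm_exp]
      apply Real.exp_le_one_iff.2
      simp; positivity
  have i3 : IntegrableOn (fun v : ℝ => ∑' d, G d v) (Set.Ioi 0) := by
    refine ((i0.sub i1).sub i2).congr ?_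
    refine (ae_restrict_iff' measurableSet_Ioi).2 (ae_of_all _ fun v hv => ?_)
    simp only [Pi.sub_apply]
    rw [hcg v hv]; ring
  have i12 : Integrable (fun v : ℝ => riemannZeta (1 / 2) * (((v ^ (N : ℝ) : ℝ) : ℂ) * cexp (-(ε : ℂ) * v)) +
      ((2 * √(π * c) : ℝ) : ℂ) * (((v ^ (N + 1 / 2 : ℝ) : ℝ) : ℂ) * cexp (-(ε : ℂ) * v)))
      (volume.restrict (Set.Ioi 0)) := i1.add i2
  rw [setIntegral_congr_fun measurableSet_Ioi hcg, integral_add i12 i3, integral_add i1 i2,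
    integral_const_mul, integral_const_mul,
    gamma_complex N hN _ (by rw [Complex.ofReal_re]; exact hε),
    gamma_complex (N + 1 / 2) hN2 _ (by rw [Complex.ofReal_re]; exact hε)]

/-! ### The limit ε → 0 -/

theorem ofReal_cpow_nat (m : ℕ) (w : ℂ) :
    w ^ (-((((2 * m : ℕ) : ℝ) : ℂ) + 1)) = w ^ (-(2 * (m : ℤ) + 1)) := by
  rw [← Complex.cpow_intCast]; congr 1; push_cast; ring

theorem FF_sub (m : ℕ) (u : ℝ) (hu : 0 < u) :
    FF (2 * m : ℕ) u - Real.Gamma (((2 * m : ℕ) : ℝ) + 1) * (u : ℂ) ^ (-((((2 * m : ℕ) : ℝ) : ℂ) + 1)) =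
      riemannZeta (-2 * m) + RR m u := by
  rw [FF_nat m u hu, Real.Gamma_nat_eq_factorial, ofReal_cpow_nat]
  push_cast; ring

theorem RR_cont (m : ℕ) : Continuous (RR m) := by
  obtain ⟨C, hC, h⟩ := RR_lip m
  refine (LipschitzWith.of_dist_le_mul (K := ⟨C, hC⟩) fun u v => ?_).continuous
  rw [dist_eq_norm, Real.dist_eq]; exact h u v

theorem eps_identity (m : ℕ) (c ε : ℝ) (hc : 0 < c) (hε : 0 < ε) :
    ∑' j : ℕ, (((((j : ℝ) + 1) ^ ((2 * m : ℕ) : ℝ) : ℝ)) : ℂ) * EE (c * ((j : ℝ) + 1)) *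
      cexp (-(ε : ℂ) * ((j : ℂ) + 1)) =
    (∫ v in Set.Ioi (0 : ℝ), ((v ^ ((2 * m : ℕ) : ℝ) : ℝ) : ℂ) * EE (c * v) * cexp (-(ε : ℂ) * v)) +
    riemannZeta (1 / 2) * (riemannZeta (-2 * m) + RR m ε) +
    ((2 * √(π * c) : ℝ) : ℂ) * (FF ((2 * m : ℕ) + 1 / 2) ε - Real.Gamma (((2 * m : ℕ) + 1 / 2 : ℝ) + 1) *
      (ε : ℂ) ^ (-((((2 * m : ℕ) + 1 / 2 : ℝ) : ℂ) + 1))) +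
    ∑' d : ℕ, ((((d : ℝ) + 1) ^ (-1 / 2 : ℝ) : ℝ) : ℂ) *
      (RR m (ε + c / ((d : ℝ) + 1)) - RR m ε) := by
  obtain ⟨s1, h1⟩ := sum_eps (2 * m) c ε hc hε
  obtain ⟨s2, h2⟩ := int_eps (2 * m) c ε hc hε
  have h3 : ∑' d : ℕ, ((((d : ℝ) + 1) ^ (-1 / 2 : ℝ) : ℝ) : ℂ) *
      (RR m (ε + c / ((d : ℝ) + 1)) - RR m ε) = _ := (by
    refine Eq.trans ?_ (s1.tsum_sub s2)
    congr 1; ext d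
    have e1 := FF_sub m (ε + c / ((d : ℝ) + 1)) (by positivity)
    have e2 := FF_sub m ε hε
    linear_combination (((((d : ℝ) + 1) ^ (-1 / 2 : ℝ) : ℝ) : ℂ)) * (e2 - e1))
  rw [h1, h2, h3]
  have e2 := FF_sub m ε hε
  linear_combination riemannZeta (1 / 2) * e2

open Filter Topology MeasureTheory in
theorem main_identity (m : ℕ) (c : ℝ) (hc : 0 < c) :
    ∑' j : ℕ, (((((j : ℝ) + 1) ^ ((2 * m : ℕ) : ℝ) : ℝ)) : ℂ) * EE (c * ((j : ℝ) + 1)) =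
    (∫ v in Set.Ioi (0 : ℝ), ((v ^ ((2 * m : ℕ) : ℝ) : ℝ) : ℂ) * EE (c * v)) +
    riemannZeta (1 / 2) * riemannZeta (-2 * m) +
    ((2 * √(π * c) : ℝ) : ℂ) * riemannZeta (-(((2 * m : ℕ) + 1 / 2 : ℝ) : ℂ)) +
    ∑' d : ℕ, ((((d : ℝ) + 1) ^ (-1 / 2 : ℝ) : ℝ) : ℂ) * RR m (c / ((d : ℝ) + 1)) := by
  have hS : Tendsto (fun ε : ℝ => ∑' j : ℕ, (((((j : ℝ) + 1) ^ ((2 * m : ℕ) : ℝ) : ℝ)) : ℂ) *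
      EE (c * ((j : ℝ) + 1)) * cexp (-(ε : ℂ) * ((j : ℂ) + 1))) (𝓝[>] 0)
      (𝓝 (∑' j : ℕ, (((((j : ℝ) + 1) ^ ((2 * m : ℕ) : ℝ) : ℝ)) : ℂ) * EE (c * ((j : ℝ) + 1)))) := by
    refine tendsto_tsum_of_dominated_convergence (EE_summable c hc (2 * m)).norm (fun n => ?_) ?_
    · have : Continuous fun ε : ℝ => (((((n : ℝ) + 1) ^ ((2 * m : ℕ) : ℝ) : ℝ)) : ℂ) *
          EE (c * ((n : ℝ) + 1)) * cexp (-(ε : ℂ) * ((n : ℂ) + 1)) := by fun_prop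
      have h := (this.tendsto 0).mono_left (nhdsWithin_le_nhds (s := Set.Ioi 0))
      simpa using h
    · filter_upwards [self_mem_nhdsWithin] with δ hδ n
      have hδ : 0 < δ := hδ
      rw [norm_mul, norm_cexp_neg]
      apply mul_le_of_le_one_right (norm_nonneg _)
      apply Real.exp_le_one_iff.2
      have : (0 : ℝ) ≤ n := by positivity
      nlinarith
  have hI : Tendsto (fun ε : ℝ => ∫ v in Set.Ioi (0 : ℝ), ((v ^ ((2 * m : ℕ) : ℝ) : ℝ) : ℂ) *
      EE (c * v) * cexp (-(ε : ℂ) * v)) (𝓝[>] 0)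
      (𝓝 (∫ v in Set.Ioi (0 : ℝ), ((v ^ ((2 * m : ℕ) : ℝ) : ℝ) : ℂ) * EE (c * v))) := by
    refine tendsto_integral_filter_of_dominated_convergence _ ?_ ?_ (EE_integrable c hc (2 * m)).norm ?_
    · refine Eventually.of_forall fun ε => (EE_integrable c hc (2 * m)).1.mul ?_
      exact (by fun_prop : Continuous fun v : ℝ => cexp (-(ε : ℂ) * v)).aestronglyMeasurable
    · filter_upwards [self_mem_nhdsWithin] with ε hε
      have hε : 0 < ε := hε
      refine (ae_restrict_iff' measurableSet_Ioi).2 (ae_of_all _ fun v hv => ?_)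
      have hv : 0 < v := hv
      rw [norm_mul]
      apply mul_le_of_le_one_right (norm_nonneg _)
      rw [Complex.norm_exp]
      apply Real.exp_le_one_iff.2
      simp; positivity
    · refine ae_of_all _ fun v => ?_
      have : Continuous fun ε : ℝ => ((v ^ ((2 * m : ℕ) : ℝ) : ℝ) : ℂ) *
          EE (c * v) * cexp (-(ε : ℂ) * v) := by fun_prop
      have h := (this.tendsto 0).mono_left (nhdsWithin_le_nhds (s := Set.Ioi 0))
      simpa using h
  have hR : Tendsto (fun ε : ℝ => riemannZeta (1 / 2) * (riemannZeta (-2 * m) + RR m ε)) (𝓝[>] 0)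
      (𝓝 (riemannZeta (1 / 2) * riemannZeta (-2 * m))) := by
    have : Continuous fun ε : ℝ => riemannZeta (1 / 2) * (riemannZeta (-2 * m) + RR m ε) := by
      have := RR_cont m
      fun_prop
    have h := (this.tendsto 0).mono_left (nhdsWithin_le_nhds (s := Set.Ioi 0))
    simpa [RR_zero] using h
  have hF := (FF_tendsto ((2 * m : ℕ) + 1 / 2) (by positivity)).const_mul ((2 * √(π * c) : ℝ) : ℂ)
  have hD : Tendsto (fun ε : ℝ => ∑' d : ℕ, ((((d : ℝ) + 1) ^ (-1 / 2 : ℝ) : ℝ) : ℂ) *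
      (RR m (ε + c / ((d : ℝ) + 1)) - RR m ε)) (𝓝[>] 0)
      (𝓝 (∑' d : ℕ, ((((d : ℝ) + 1) ^ (-1 / 2 : ℝ) : ℝ) : ℂ) * RR m (c / ((d : ℝ) + 1)))) := by
    obtain ⟨C, hC, hl⟩ := RR_lip m
    refine tendsto_tsum_of_dominated_convergence
      ((summable_rpow_add_one (1 / 2) (by norm_num)).mul_left (C * c)) (fun d => ?_) ?_
    · have : Continuous fun ε : ℝ => ((((d : ℝ) + 1) ^ (-1 / 2 : ℝ) : ℝ) : ℂ) *
          (RR m (ε + c / ((d : ℝ) + 1)) - RR m ε) := by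
        have := RR_cont m
        fun_prop
      have h := (this.tendsto 0).mono_left (nhdsWithin_le_nhds (s := Set.Ioi 0))
      simpa [RR_zero] using h
    · refine Eventually.of_forall fun ε d => ?_
      have hd : (0 : ℝ) < (d : ℝ) + 1 := by positivity
      rw [norm_mul, Complex.norm_real, Real.norm_of_nonneg (by positivity)]
      have h1 := hl (ε + c / ((d : ℝ) + 1)) ε
      rw [add_sub_cancel_left, abs_of_pos (by positivity)] at h1
      calc ((d : ℝ) + 1) ^ (-1 / 2 : ℝ) * ‖RR m (ε + c / ((d : ℝ) + 1)) - RR m ε‖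
          ≤ ((d : ℝ) + 1) ^ (-1 / 2 : ℝ) * (C * (c / ((d : ℝ) + 1))) := by gcongr
        _ = C * c * (((d : ℝ) + 1) ^ (-1 / 2 : ℝ) * ((d : ℝ) + 1) ^ (-1 : ℝ)) := by
            rw [Real.rpow_neg_one]; ring
        _ = _ := by rw [← Real.rpow_add hd]; norm_num
  refine tendsto_nhds_unique hS (((hI.add hR).add hF).add hD |>.congr' ?_)
  filter_upwards [self_mem_nhdsWithin] with ε hε
  exact (eps_identity m c ε hc hε).symm

/-! ### The integral of E -/

theorem zpt_half_sq (κ : ℝ) : (zpt 0 κ ^ (1 / 2 : ℂ)) ^ 2 = zpt 0 κ := by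
  rw [← Complex.cpow_nat_mul]; norm_num

theorem dup_nat (N : ℕ) : (Real.Gamma ((N + 1 / 2 : ℝ) + 1)) * N.factorial =
    2 * √π * (2 * N + 1).factorial / 4 ^ (N + 1) := by
  have h := Real.Gamma_mul_Gamma_add_half ((N : ℝ) + 1)
  rw [Real.Gamma_nat_eq_factorial, show (2 : ℝ) * ((N : ℝ) + 1) = ((2 * N + 1 : ℕ) : ℝ) + 1 by
    push_cast; ring, Real.Gamma_nat_eq_factorial] at h
  rw [show (N + 1 / 2 : ℝ) + 1 = (N : ℝ) + 1 + 1 / 2 by ring, mul_comm, h,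
    show (1 : ℝ) - (((2 * N + 1 : ℕ) : ℝ) + 1) = -((2 * N + 1 : ℕ) : ℝ) by ring,
    Real.rpow_neg (by norm_num), Real.rpow_natCast,
    show (4 : ℝ) = 2 ^ 2 by norm_num, ← pow_mul]
  field_simp
  ring

open MeasureTheory in
theorem TT_integral (N : ℕ) (c κ : ℝ) (hc : 0 < c) (hκ : κ ≠ 0) :
    ∫ v in Set.Ioi (0 : ℝ), ((v ^ (N : ℝ) : ℝ) : ℂ) * TT (c * v) 0 κ =
      N.factorial * ((c ^ (N + 1) : ℝ) : ℂ)⁻¹ *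
        (Real.Gamma ((N + 1 / 2 : ℝ) + 1) * zpt 0 κ ^ (-(((N + 1 / 2 : ℝ) : ℂ) + 1))) := by
  have hz0 : zpt 0 κ ≠ 0 := Complex.slitPlane_ne_zero (zpt_slit 0 κ (Or.inr hκ))
  set s := zpt 0 κ ^ (1 / 2 : ℂ) with hs
  have hs2 : s ^ 2 = zpt 0 κ := zpt_half_sq κ
  have hsre : 0 < s.re := by
    refine lt_of_lt_of_le ?_ (re_sqrt_ge (zpt 0 κ) (by rw [zpt_re]))
    have := norm_pos_iff.2 hz0
    positivity
  have hs0 : s ≠ 0 := by intro h; rw [h] at hsre; simp at hsre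
  have hsinv : zpt 0 κ ^ (-1 / 2 : ℂ) = s⁻¹ := by
    rw [hs, ← Complex.cpow_neg]; congr 1; ring
  rw [← integral_comp_rpow_Ioi (fun v : ℝ => ((v ^ (N : ℝ) : ℝ) : ℂ) * TT (c * v) 0 κ)
    (p := 2) (by norm_num)]
  have hcg : ∀ u ∈ Set.Ioi (0 : ℝ), (|(2 : ℝ)| * u ^ ((2 : ℝ) - 1)) •
      ((((u ^ (2 : ℝ)) ^ (N : ℝ) : ℝ) : ℂ) * TT (c * u ^ (2 : ℝ)) 0 κ) =
      (2 * √π * s⁻¹) * (((u ^ ((2 * N + 1 : ℕ) : ℝ) : ℝ) : ℂ) * cexp (-(2 * √c * s) * u)) := by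
    intro u hu
    have hu : 0 < u := hu
    have e1 : √(c * u ^ (2 : ℝ)) = √c * u := by
      rw [Real.sqrt_mul hc.le, Real.rpow_two, Real.sqrt_sq hu.le]
    have e2 : u ^ ((2 : ℝ) - 1) = u := by norm_num
    have e3 : (u ^ (2 : ℝ)) ^ (N : ℝ) = u ^ (2 * N) := by
      rw [Real.rpow_two, Real.rpow_natCast, pow_mul]
    rw [TT, e1, e2, e3, hsinv, ← hs, Real.rpow_natCast, Complex.real_smul]
    have e4 : cexp (-2 * ((√c * u : ℝ) : ℂ) * s) = cexp (-(2 * √c * s) * u) := by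
      congr 1; push_cast; ring
    rw [e4]
    simp only [abs_two]
    push_cast; ring
  rw [setIntegral_congr_fun measurableSet_Ioi hcg, integral_const_mul,
    gamma_complex _ (by push_cast; have : (0 : ℝ) ≤ N := by positivity
                        linarith) _ (by
      have : (2 * (√c : ℂ) * s).re = 2 * √c * s.re := by
        rw [show (2 * (√c : ℂ) * s) = ((2 * √c : ℝ) : ℂ) * s by push_cast; ring, Complex.re_ofReal_mul]
      rw [this]; positivity), Real.Gamma_nat_eq_factorial]
  have e5 : (2 * (√c : ℂ) * s) ^ (-((((2 * N + 1 : ℕ) : ℝ) : ℂ) + 1)) =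
      ((4 * (c : ℂ) * zpt 0 κ) ^ (N + 1))⁻¹ := by
    rw [Complex.cpow_neg, show ((((2 * N + 1 : ℕ) : ℝ) : ℂ) + 1) = ((2 * (N + 1) : ℕ) : ℂ) by
      push_cast; ring, Complex.cpow_natCast, pow_mul]
    have hsc : ((√c : ℂ)) ^ 2 = c := by rw [← Complex.ofReal_pow, Real.sq_sqrt hc.le]
    have : (2 * (√c : ℂ) * s) ^ 2 = 4 * (c : ℂ) * zpt 0 κ := by
      rw [mul_pow, mul_pow, hs2, hsc]; norm_num
    rw [this]
  have e6 : zpt 0 κ ^ (-(((N + 1 / 2 : ℝ) : ℂ) + 1)) = s⁻¹ * (zpt 0 κ ^ (N + 1))⁻¹ := by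
    rw [show (-(((N + 1 / 2 : ℝ) : ℂ) + 1)) = (-1 / 2 : ℂ) + -((N + 1 : ℕ) : ℂ) by push_cast; ring,
      Complex.cpow_add _ _ hz0, hsinv, Complex.cpow_neg, Complex.cpow_natCast]
  rw [e5, e6]
  have hd := congrArg (fun x : ℝ => (x : ℂ)) (dup_nat N)
  push_cast at hd
  have h4 : (4 : ℂ) ^ (N + 1) ≠ 0 := pow_ne_zero _ (by norm_num)
  have hcc : (c : ℂ) ^ (N + 1) ≠ 0 := pow_ne_zero _ (by exact_mod_cast hc.ne')
  have hzz : (zpt 0 κ) ^ (N + 1) ≠ 0 := pow_ne_zero _ hz0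
  rw [eq_div_iff h4] at hd
  rw [mul_pow, mul_pow]
  push_cast
  generalize (Real.Gamma ((N + 1 / 2 : ℝ) + 1) : ℂ) = g at hd ⊢
  field_simp
  linear_combination (-1 : ℂ) * hd

open MeasureTheory in
theorem TT_int_norm (N : ℕ) (c : ℝ) (hc : 0 < c) : ∃ C : ℝ, ∀ (k : ℕ) (κ : ℝ), |κ| = (k : ℝ) + 1 →
    IntegrableOn (fun v : ℝ => ((v ^ (N : ℝ) : ℝ) : ℂ) * TT (c * v) 0 κ) (Set.Ioi 0) ∧
    ∫ v in Set.Ioi (0 : ℝ), ‖((v ^ (N : ℝ) : ℝ) : ℂ) * TT (c * v) 0 κ‖ ≤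
      C * ((k : ℝ) + 1) ^ (-(1 / 2 + 1) : ℝ) := by
  have hπ := Real.pi_pos
  have hN : (-1 : ℝ) < N := by have : (0 : ℝ) ≤ N := by positivity
                               linarith
  refine ⟨(2 * √(π * c)) ^ (-((N : ℝ) + 1) / (1 / 2)) * (1 / (1 / 2)) *
    Real.Gamma (((N : ℝ) + 1) / (1 / 2)), fun k κ hκ => ?_⟩
  have hk : (0 : ℝ) < (k : ℝ) + 1 := by positivity
  have hk1 : (1 : ℝ) ≤ (k : ℝ) + 1 := by have : (0 : ℝ) ≤ k := by positivity
                                         linarith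
  set b : ℝ := 2 * √(π * c) * √((k : ℝ) + 1) with hb
  have hb0 : 0 < b := by positivity
  have hbd : ∀ v ∈ Set.Ioi (0 : ℝ), ‖((v ^ (N : ℝ) : ℝ) : ℂ) * TT (c * v) 0 κ‖ ≤
      ((k : ℝ) + 1) ^ (-1 / 2 : ℝ) * (v ^ (N : ℝ) * Real.exp (-b * v ^ (1 / 2 : ℝ))) := by
    intro v hv
    have hv : 0 < v := hv
    have h := TT_bound (c * v) 0 κ (by positivity) le_rfl (by rw [hκ]; exact hk1)
    rw [hκ] at h
    have e : -2 * √(π * (c * v) * ((k : ℝ) + 1)) = -b * v ^ (1 / 2 : ℝ) := by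
      rw [hb, ← Real.sqrt_eq_rpow, show π * (c * v) * ((k : ℝ) + 1) = (π * c) * ((k : ℝ) + 1) * v by ring,
        Real.sqrt_mul (by positivity), Real.sqrt_mul (by positivity)]
      ring
    rw [e] at h
    rw [norm_mul, Complex.norm_real, Real.norm_of_nonneg (by positivity)]
    calc v ^ (N : ℝ) * ‖TT (c * v) 0 κ‖ ≤ v ^ (N : ℝ) *
          (((k : ℝ) + 1) ^ (-1 / 2 : ℝ) * Real.exp (-b * v ^ (1 / 2 : ℝ))) := by gcongr
      _ = _ := by ring
  have hi := (integrableOn_rpow_mul_exp_neg_mul_rpow (s := (N : ℝ)) (p := 1 / 2) hN (by norm_num)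
    hb0).const_mul (((k : ℝ) + 1) ^ (-1 / 2 : ℝ))
  have hintg : IntegrableOn (fun v : ℝ => ((v ^ (N : ℝ) : ℝ) : ℂ) * TT (c * v) 0 κ) (Set.Ioi 0) := by
    refine Integrable.mono' hi ?_ ((ae_restrict_iff' measurableSet_Ioi).2 (ae_of_all _ hbd))
    exact ((Complex.continuous_ofReal.comp (Real.continuous_rpow_const (by positivity))).mul
      (TT_cont c κ)).aestronglyMeasurable
  refine ⟨hintg, ?_⟩
  refine (setIntegral_mono_on hintg.norm hi measurableSet_Ioi hbd).trans ?_
  rw [integral_const_mul, integral_rpow_mul_exp_neg_mul_rpow (by norm_num) hN hb0]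
  have e1 : b ^ (-((N : ℝ) + 1) / (1 / 2)) ≤
      (2 * √(π * c)) ^ (-((N : ℝ) + 1) / (1 / 2)) * ((k : ℝ) + 1) ^ (-1 : ℝ) := by
    rw [hb, Real.mul_rpow (by positivity) (by positivity)]
    gcongr
    rw [Real.sqrt_eq_rpow, ← Real.rpow_mul hk.le]
    apply Real.rpow_le_rpow_of_exponent_le hk1
    have : (0 : ℝ) ≤ N := by positivity
    linarith
  have hG : 0 ≤ Real.Gamma (((N : ℝ) + 1) / (1 / 2)) := (Real.Gamma_pos_of_pos (by positivity)).le
  calc ((k : ℝ) + 1) ^ (-1 / 2 : ℝ) * (b ^ (-((N : ℝ) + 1) / (1 / 2)) * (1 / (1 / 2)) *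
        Real.Gamma (((N : ℝ) + 1) / (1 / 2)))
      ≤ ((k : ℝ) + 1) ^ (-1 / 2 : ℝ) * (((2 * √(π * c)) ^ (-((N : ℝ) + 1) / (1 / 2)) *
        ((k : ℝ) + 1) ^ (-1 : ℝ)) * (1 / (1 / 2)) * Real.Gamma (((N : ℝ) + 1) / (1 / 2))) := by
        gcongr
    _ = ((2 * √(π * c)) ^ (-((N : ℝ) + 1) / (1 / 2)) * (1 / (1 / 2)) *
        Real.Gamma (((N : ℝ) + 1) / (1 / 2))) *
        (((k : ℝ) + 1) ^ (-1 / 2 : ℝ) * ((k : ℝ) + 1) ^ (-1 : ℝ)) := by ring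
    _ = _ := by rw [← Real.rpow_add hk]; norm_num

open MeasureTheory in
theorem EE_integral (N : ℕ) (c : ℝ) (hc : 0 < c) :
    ∫ v in Set.Ioi (0 : ℝ), ((v ^ (N : ℝ) : ℝ) : ℂ) * EE (c * v) =
      N.factorial * ((c ^ (N + 1) : ℝ) : ℂ)⁻¹ * riemannZeta (-((N + 1 / 2 : ℝ) : ℂ)) := by
  obtain ⟨C, hC⟩ := TT_int_norm N c hc
  have h1 : ∀ k : ℕ, |(k : ℝ) + 1| = (k : ℝ) + 1 := fun k => abs_of_pos (by positivity)
  have h2 : ∀ k : ℕ, |-((k : ℝ) + 1)| = (k : ℝ) + 1 := fun k => by rw [abs_neg, h1]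
  set G : ℕ → ℝ → ℂ := fun k v => ((v ^ (N : ℝ) : ℝ) : ℂ) * TT (c * v) 0 ((k : ℝ) + 1) +
    ((v ^ (N : ℝ) : ℝ) : ℂ) * TT (c * v) 0 (-((k : ℝ) + 1)) with hG
  have hGi : ∀ k, IntegrableOn (G k) (Set.Ioi 0) := fun k =>
    ((hC k _ (h1 k)).1).add ((hC k _ (h2 k)).1)
  have hGn : ∀ k, ∫ v in Set.Ioi (0 : ℝ), ‖G k v‖ ≤
      2 * (C * ((k : ℝ) + 1) ^ (-(1 / 2 + 1) : ℝ)) := by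
    intro k
    have i1 := (hC k _ (h1 k)).1.norm
    have i2 := (hC k _ (h2 k)).1.norm
    have := integral_mono (hGi k).norm (i1.add i2) (fun v => norm_add_le _ _)
    simp only [Pi.add_apply] at this
    rw [integral_add i1 i2] at this
    linarith [(hC k _ (h1 k)).2, (hC k _ (h2 k)).2]
  have hsum : Summable fun k => ∫ v in Set.Ioi (0 : ℝ), ‖G k v‖ :=
    Summable.of_nonneg_of_le (fun d => integral_nonneg fun v => norm_nonneg _) hGn
      (((summable_rpow_add_one (1 / 2) (by norm_num)).mul_left C).mul_left 2)
  have hhs := integral_tsum_of_summable_integral_norm hGi hsum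
  have e : ∫ v in Set.Ioi (0 : ℝ), ((v ^ (N : ℝ) : ℝ) : ℂ) * EE (c * v) =
      ∫ v in Set.Ioi (0 : ℝ), ∑' k, G k v := by
    congr 1; ext v
    rw [EE, ← tsum_mul_left]
    simp only [hG, mul_add]
  rw [e, ← hhs, ← zsum_zero (N + 1 / 2) (by positivity), ← tsum_mul_left]
  congr 1; ext k
  have i1 := (hC k _ (h1 k)).1
  have i2 := (hC k _ (h2 k)).1
  have hk : ((k : ℝ) + 1) ≠ 0 := by positivity
  simp only [hG]
  rw [integral_add i1 i2, TT_integral N c _ hc hk, TT_integral N c _ hc (neg_ne_zero.2 hk)]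
  push_cast
  ring

/-! ### Regrouping by divisors -/

theorem regroup (s : ℝ) (g : ℕ → ℂ)
    (h : Summable fun p : ℕ × ℕ => ((((p.1 : ℝ) + 1) ^ s : ℝ) : ℂ) * g ((p.1 + 1) * (p.2 + 1))) :
    ∑' d : ℕ, ∑' k : ℕ, ((((d : ℝ) + 1) ^ s : ℝ) : ℂ) * g ((d + 1) * (k + 1)) =
      ∑' n : ℕ, ((rsigma s (n + 1) : ℝ) : ℂ) * g (n + 1) := by
  have e1 := h.tsum_prod
  simp only at e1
  rw [← e1]
  set G : ℕ+ × ℕ+ → ℂ := fun q => ((((q.1 : ℕ) : ℝ) ^ s : ℝ) : ℂ) * g ((q.1 : ℕ) * (q.2 : ℕ)) with hG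
  have e2 : ∀ p : ℕ × ℕ, ((((p.1 : ℝ) + 1) ^ s : ℝ) : ℂ) * g ((p.1 + 1) * (p.2 + 1)) =
      G ((Equiv.pnatEquivNat.symm.prodCongr Equiv.pnatEquivNat.symm) p) := by
    intro p
    simp [hG]
  simp_rw [e2] at h ⊢
  have hGs : Summable G := (Equiv.summable_iff _).1 h
  rw [Equiv.tsum_eq, ← sigmaAntidiagonalEquivProd.tsum_eq]
  have hs : Summable fun c => G (sigmaAntidiagonalEquivProd c) :=
    sigmaAntidiagonalEquivProd.summable_iff.2 hGs
  rw [hs.tsum_sigma, ← tsum_pnat_eq_tsum_succ (f := fun n => ((rsigma s n : ℝ) : ℂ) * g n)]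
  refine tsum_congr fun n => ?_
  rw [tsum_fintype]
  have e3 : ∀ b : Nat.divisorsAntidiagonal (n : ℕ), G (sigmaAntidiagonalEquivProd ⟨n, b⟩) =
      (((b.1.1 : ℝ) ^ s : ℝ) : ℂ) * g n := by
    intro b
    have := (Nat.mem_divisorsAntidiagonal.mp b.2).1
    simp [hG, sigmaAntidiagonalEquivProd, divisorsAntidiagonalFactors, this]
  simp_rw [e3]
  rw [← Finset.sum_mul, rsigma, Finset.univ_eq_attach,
    (n : ℕ).divisorsAntidiagonal.sum_attach (fun x : ℕ × ℕ => (((x.1 : ℝ) ^ s : ℝ) : ℂ)),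
    Nat.sum_divisorsAntidiagonal (fun x _ => (((x : ℝ) ^ s : ℝ) : ℂ))]
  push_cast
  rfl

theorem zpt_half_pos (κ : ℝ) (hκ : 0 < κ) :
    zpt 0 κ ^ (1 / 2 : ℂ) = (√(π * κ) : ℂ) * (1 + I) := by
  have hp : 0 < √(π * κ) := Real.sqrt_pos.2 (by have := Real.pi_pos; positivity)
  have h : (√(π * κ) : ℂ) ^ 2 = π * κ := by
    rw [← Complex.ofReal_pow, Real.sq_sqrt (by have := Real.pi_pos; positivity)]; push_cast; rfl
  have : zpt 0 κ = ((√(π * κ) : ℂ) * (1 + I)) ^ 2 := by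
    rw [mul_pow, h, zpt, add_sq, I_sq]; push_cast; ring
  rw [this, one_div, Complex.sq_cpow_two_inv]
  simpa using hp

theorem zpt_half_neg (κ : ℝ) (hκ : 0 < κ) :
    zpt 0 (-κ) ^ (1 / 2 : ℂ) = (√(π * κ) : ℂ) * (1 - I) := by
  have hp : 0 < √(π * κ) := Real.sqrt_pos.2 (by have := Real.pi_pos; positivity)
  have h : (√(π * κ) : ℂ) ^ 2 = π * κ := by
    rw [← Complex.ofReal_pow, Real.sq_sqrt (by have := Real.pi_pos; positivity)]; push_cast; rfl
  have : zpt 0 (-κ) = ((√(π * κ) : ℂ) * (1 - I)) ^ 2 := by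
    rw [mul_pow, h, zpt, sub_sq, I_sq]; push_cast; ring
  rw [this, one_div, Complex.sq_cpow_two_inv]
  simpa using hp

theorem TT_pair (a κ : ℝ) (ha : 0 < a) (hκ : 0 < κ) :
    TT a 0 κ + TT a 0 (-κ) = ((√2 * (1 / √κ * Real.exp (-(2 * √(π * κ * a))) *
      Real.sin (π / 4 - 2 * √(π * κ * a))) : ℝ) : ℂ) := by
  have hπ := Real.pi_pos
  have hneg : ∀ κ, zpt 0 κ ^ (-1 / 2 : ℂ) = (zpt 0 κ ^ (1 / 2 : ℂ))⁻¹ := fun κ => by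
    rw [← Complex.cpow_neg]; congr 1; ring
  have hw : √(π * κ * a) = √(π * κ) * √a := Real.sqrt_mul (by positivity) _
  set w := 2 * √(π * κ * a) with hwd
  rw [TT, TT, hneg, hneg, zpt_half_pos κ hκ, zpt_half_neg κ hκ]
  have x1 : cexp (-2 * √a * ((√(π * κ) : ℂ) * (1 + I))) =
      cexp (-w) * (Complex.cos w - Complex.sin w * I) := by
    rw [show Complex.cos w - Complex.sin w * I = cexp (-w * I) by
      rw [Complex.exp_mul_I, Complex.cos_neg, Complex.sin_neg]; ring,
      ← Complex.exp_add, hwd, hw]; congr 1; push_cast; ring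
  have x2 : cexp (-2 * √a * ((√(π * κ) : ℂ) * (1 - I))) =
      cexp (-w) * (Complex.cos w + Complex.sin w * I) := by
    rw [← Complex.exp_mul_I, ← Complex.exp_add, hwd, hw]; congr 1; push_cast; ring
  rw [x1, x2, Real.sin_sub, Real.cos_pi_div_four, Real.sin_pi_div_four, Real.sqrt_mul hπ.le]
  have i1 : (1 + I : ℂ)⁻¹ = (1 - I) / 2 := by
    rw [inv_eq_iff_eq_inv, inv_div, eq_div_iff (by intro h; simpa using congrArg Complex.re h)]
    linear_combination (-1 : ℂ) * I_sq
  have i2 : (1 - I : ℂ)⁻¹ = (1 + I) / 2 := by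
    rw [inv_eq_iff_eq_inv, inv_div, eq_div_iff (by intro h; simpa using congrArg Complex.re h)]
    linear_combination (-1 : ℂ) * I_sq
  have hp : (√π : ℂ) ≠ 0 := by exact_mod_cast (Real.sqrt_pos.2 hπ).ne'
  have hk : (√κ : ℂ) ≠ 0 := by exact_mod_cast (Real.sqrt_pos.2 hκ).ne'
  have h2 : (√2 : ℂ) ^ 2 = 2 := by rw [← Complex.ofReal_pow, Real.sq_sqrt (by norm_num)]; norm_num
  rw [mul_inv, mul_inv, i1, i2]
  push_cast
  field_simp
  rw [h2]
  linear_combination (2 * Complex.sin w) * I_sq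

/-! ### The two divisor sums -/

theorem left_sum (m : ℕ) (x : ℝ) (hx : 0 < x) :
    ∑' j : ℕ, (((((j : ℝ) + 1) ^ ((2 * m : ℕ) : ℝ) : ℝ)) : ℂ) * EE (2 * π * x * ((j : ℝ) + 1)) =
      (√2 : ℂ) * ∑' n : ℕ, ((rsigma (2 * m + 1 / 2) (n + 1) / Real.sqrt ((n : ℝ) + 1) *
        Real.exp (-(2 * π * Real.sqrt (2 * ((n : ℝ) + 1) * x))) *
        Real.sin (π / 4 - 2 * π * Real.sqrt (2 * ((n : ℝ) + 1) * x)) : ℝ) : ℂ) := by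
  have hπ := Real.pi_pos
  have hc : 0 < 2 * π * x := by positivity
  set g : ℕ → ℂ := fun n => ((√2 * (1 / √(n : ℝ) * Real.exp (-(2 * π * √(2 * (n : ℝ) * x))) *
    Real.sin (π / 4 - 2 * π * √(2 * (n : ℝ) * x))) : ℝ) : ℂ) with hg
  have key : ∀ j k : ℕ, ((((j : ℝ) + 1) ^ (2 * m + 1 / 2 : ℝ) : ℝ) : ℂ) * g ((j + 1) * (k + 1)) =
      (((((j : ℝ) + 1) ^ ((2 * m : ℕ) : ℝ) : ℝ)) : ℂ) *
        (TT (2 * π * x * ((j : ℝ) + 1)) 0 ((k : ℝ) + 1) +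
          TT (2 * π * x * ((j : ℝ) + 1)) 0 (-((k : ℝ) + 1))) := by
    intro j k
    have hj : (0 : ℝ) < (j : ℝ) + 1 := by positivity
    have hk : (0 : ℝ) < (k : ℝ) + 1 := by positivity
    rw [TT_pair _ _ (by positivity) hk]
    have e1 : √(π * ((k : ℝ) + 1) * (2 * π * x * ((j : ℝ) + 1))) =
        π * √(2 * (((j + 1) * (k + 1) : ℕ) : ℝ) * x) := by
      rw [show π * ((k : ℝ) + 1) * (2 * π * x * ((j : ℝ) + 1)) =
        π ^ 2 * (2 * (((j + 1) * (k + 1) : ℕ) : ℝ) * x) by push_cast; ring,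
        Real.sqrt_mul (by positivity), Real.sqrt_sq hπ.le]
    have e2 : ((j : ℝ) + 1) ^ (2 * m + 1 / 2 : ℝ) =
        ((j : ℝ) + 1) ^ ((2 * m : ℕ) : ℝ) * √((j : ℝ) + 1) := by
      rw [Real.rpow_add hj, Real.sqrt_eq_rpow]; push_cast; rfl
    have e3 : √(((j + 1) * (k + 1) : ℕ) : ℝ) = √((j : ℝ) + 1) * √((k : ℝ) + 1) := by
      push_cast; rw [Real.sqrt_mul hj.le]
    simp only [hg]
    rw [e1, e2, e3, ← Complex.ofReal_mul, ← Complex.ofReal_mul]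
    congr 1
    have : √((j : ℝ) + 1) ≠ 0 := (Real.sqrt_pos.2 hj).ne'
    have : √((k : ℝ) + 1) ≠ 0 := (Real.sqrt_pos.2 hk).ne'
    rw [← mul_assoc 2 π]
    field_simp
  have hS : Summable fun p : ℕ × ℕ =>
      ((((p.1 : ℝ) + 1) ^ (2 * m + 1 / 2 : ℝ) : ℝ) : ℂ) * g ((p.1 + 1) * (p.2 + 1)) := by
    set b := √(π * (2 * π * x)) with hb
    have hb0 : 0 < b := Real.sqrt_pos.2 (by positivity)
    have s1 := summable_exp_sqrt b hb0 (2 * m)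
    have s2 := (summable_exp_sqrt b hb0 0).mul_left 2
    refine Summable.of_norm_bounded (s1.mul_of_nonneg s2 (fun _ => by positivity)
      (fun _ => by positivity)) fun p => ?_
    rw [key]
    have h := TT_bound_prod (2 * π * x) hc ((p.1 : ℝ) + 1) (by
      have : (0 : ℝ) ≤ p.1 := by positivity
      linarith) p.2
    rw [norm_mul, Complex.norm_real, Real.norm_of_nonneg (by positivity), Real.rpow_natCast]
    calc _ ≤ ((p.1 : ℝ) + 1) ^ (2 * m) * (Real.exp (-b * √((p.1 : ℝ) + 1)) *
          Real.exp (-b * √((p.2 : ℝ) + 1)) + Real.exp (-b * √((p.1 : ℝ) + 1)) *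
          Real.exp (-b * √((p.2 : ℝ) + 1))) := by
          gcongr
          exact (norm_add_le _ _).trans (add_le_add h.1 h.2)
      _ = _ := by simp only [pow_zero]; ring
  have := regroup _ g hS
  simp_rw [key, tsum_mul_left] at this
  simp only [EE]
  rw [this, ← tsum_mul_left]
  refine tsum_congr fun n => ?_
  simp only [hg]
  push_cast
  ring

theorem zpt_scale (x : ℝ) (d k : ℕ) : zpt (2 * π * x / ((d : ℝ) + 1)) ((k : ℝ) + 1) =
    ((2 * π / ((d : ℝ) + 1) : ℝ) : ℂ) * ((x : ℂ) + I * (((d + 1) * (k + 1) : ℕ) : ℂ)) := by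
  have : (d : ℂ) + 1 ≠ 0 := Nat.cast_add_one_ne_zero d
  rw [zpt]; push_cast; field_simp

theorem zpt_scale' (x : ℝ) (d k : ℕ) : zpt (2 * π * x / ((d : ℝ) + 1)) (-((k : ℝ) + 1)) =
    ((2 * π / ((d : ℝ) + 1) : ℝ) : ℂ) * ((x : ℂ) - I * (((d + 1) * (k + 1) : ℕ) : ℂ)) := by
  have : (d : ℂ) + 1 ≠ 0 := Nat.cast_add_one_ne_zero d
  rw [zpt]; push_cast; field_simp; ring

theorem right_sum (m : ℕ) (x : ℝ) (hx : 0 < x) :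
    ∑' d : ℕ, ((((d : ℝ) + 1) ^ (-1 / 2 : ℝ) : ℝ) : ℂ) * RR m (2 * π * x / ((d : ℝ) + 1)) =
      ((2 * m).factorial : ℂ) * (((2 * π) ^ (2 * m + 1) : ℝ) : ℂ)⁻¹ * ∑' n : ℕ,
          ((rsigma (2 * m + 1 / 2) (n + 1) : ℝ) : ℂ) *
            (((x : ℂ) - Complex.I * ((n : ℂ) + 1)) ^ (-(2 * (m : ℤ) + 1)) +
              ((x : ℂ) + Complex.I * ((n : ℂ) + 1)) ^ (-(2 * (m : ℤ) + 1))) := by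
  have hπ := Real.pi_pos
  set g : ℕ → ℂ := fun n => ((x : ℂ) - Complex.I * (n : ℂ)) ^ (-(2 * (m : ℤ) + 1)) +
              ((x : ℂ) + Complex.I * (n : ℂ)) ^ (-(2 * (m : ℤ) + 1)) with hg
  have key : ∀ d k : ℕ, ((((d : ℝ) + 1) ^ (2 * m + 1 / 2 : ℝ) : ℝ) : ℂ) * g ((d + 1) * (k + 1)) =
      (((2 * π) ^ (2 * m + 1) : ℝ) : ℂ) * (((((d : ℝ) + 1) ^ (-1 / 2 : ℝ) : ℝ) : ℂ) *
        rr m (2 * π * x / ((d : ℝ) + 1)) k) := by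
    intro d k
    have hd : (0 : ℝ) < (d : ℝ) + 1 := by positivity
    rw [rr, zpt_scale, zpt_scale', mul_zpow, mul_zpow, ← mul_add]
    have e1 : ((2 * π / ((d : ℝ) + 1) : ℝ) : ℂ) ^ (-(2 * (m : ℤ) + 1)) =
        ((((2 * π) ^ (2 * m + 1))⁻¹ * ((d : ℝ) + 1) ^ (2 * m + 1) : ℝ) : ℂ) := by
      rw [zpow_neg, show (2 * (m : ℤ) + 1) = ((2 * m + 1 : ℕ) : ℤ) by push_cast; ring,
        zpow_natCast, ← Complex.ofReal_pow, ← Complex.ofReal_inv, div_pow, inv_div]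
      congr 1
      rw [div_eq_mul_inv, mul_comm]
    have e2 : ((d : ℝ) + 1) ^ (2 * m + 1 / 2 : ℝ) =
        ((d : ℝ) + 1) ^ (-1 / 2 : ℝ) * ((d : ℝ) + 1) ^ (2 * m + 1) := by
      rw [← Real.rpow_natCast, ← Real.rpow_add hd]; congr 1; push_cast; ring
    rw [e1, e2]
    simp only [hg]
    have hp : (((2 * π) ^ (2 * m + 1) : ℝ) : ℂ) ≠ 0 := by
      exact_mod_cast (by positivity : (0 : ℝ) < (2 * π) ^ (2 * m + 1)).ne'
    rw [Complex.ofReal_mul, Complex.ofReal_mul, Complex.ofReal_inv]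
    rw [add_comm (((x : ℂ) - _) ^ _)]
    field_simp
  have hS : Summable fun p : ℕ × ℕ =>
      ((((p.1 : ℝ) + 1) ^ (2 * m + 1 / 2 : ℝ) : ℝ) : ℂ) * g ((p.1 + 1) * (p.2 + 1)) := by
    simp_rw [key]
    refine Summable.mul_left _ ?_
    have s1 := summable_rpow_add_one (1 / 2) (by norm_num)
    have s2 := summable_inv_sq.mul_left (2 * (2 * m + 1) * (2 * π * x))
    refine Summable.of_norm_bounded (s1.mul_of_nonneg s2 (fun _ => by positivity)
      (fun _ => by positivity)) fun p => ?_
    have hd : (0 : ℝ) < (p.1 : ℝ) + 1 := by positivity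
    rw [norm_mul, Complex.norm_real, Real.norm_of_nonneg (by positivity)]
    have h := rr_bound m p.2 (2 * π * x / ((p.1 : ℝ) + 1))
    rw [abs_of_pos (by positivity)] at h
    have e : ((p.1 : ℝ) + 1) ^ (-(1 / 2 + 1) : ℝ) =
        ((p.1 : ℝ) + 1) ^ (-1 / 2 : ℝ) * ((p.1 : ℝ) + 1)⁻¹ := by
      rw [← Real.rpow_neg_one, ← Real.rpow_add hd]; norm_num
    calc _ ≤ ((p.1 : ℝ) + 1) ^ (-1 / 2 : ℝ) * (2 * ((2 * m + 1) * (1 / ((p.2 : ℝ) + 1) ^ 2) *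
          (2 * π * x / ((p.1 : ℝ) + 1)))) := by gcongr
      _ = _ := by simp only [e]; ring
  have := regroup _ g hS
  simp_rw [key, tsum_mul_left] at this
  simp only [RR]
  have hp : (((2 * π) ^ (2 * m + 1) : ℝ) : ℂ) ≠ 0 := by
    exact_mod_cast (by positivity : (0 : ℝ) < (2 * π) ^ (2 * m + 1)).ne'
  have e : ∑' n : ℕ, ((rsigma (2 * m + 1 / 2) (n + 1) : ℝ) : ℂ) *
      (((x : ℂ) - Complex.I * ((n : ℂ) + 1)) ^ (-(2 * (m : ℤ) + 1)) +
        ((x : ℂ) + Complex.I * ((n : ℂ) + 1)) ^ (-(2 * (m : ℤ) + 1))) =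
      ∑' n : ℕ, ((rsigma (2 * m + 1 / 2) (n + 1) : ℝ) : ℂ) * g (n + 1) := by
    refine tsum_congr fun n => ?_
    simp only [hg]; push_cast; rfl
  rw [e, ← this, ← mul_assoc, inv_mul_cancel_right₀ hp, ← tsum_mul_left]
  refine tsum_congr fun d => ?_
  ring

theorem coalescence_minus (m : ℕ) (x : ℝ) (hx : 0 < x) :
    (∑' n : ℕ, ((rsigma (2 * m + 1 / 2) (n + 1) / Real.sqrt ((n : ℝ) + 1) *
        Real.exp (-(2 * π * Real.sqrt (2 * ((n : ℝ) + 1) * x))) *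
        Real.sin (π / 4 - 2 * π * Real.sqrt (2 * ((n : ℝ) + 1) * x)) : ℝ) : ℂ))
    = ((2 * π * Real.sqrt x +
          (Nat.factorial (2 * m) : ℝ) / (Real.sqrt 2 * (2 * π * x) ^ (2 * m + 1)) : ℝ) : ℂ) *
        riemannZeta (-1 / 2 - 2 * m)
      + (1 / (Real.sqrt 2 : ℂ)) * riemannZeta (1 / 2) * riemannZeta (-2 * m)
      + ((Real.sqrt π * (Nat.factorial (2 * m) : ℝ) /
            (2 * π) ^ (2 * (m : ℝ) + 3 / 2) : ℝ) : ℂ) *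
        ∑' n : ℕ,
          ((rsigma (2 * m + 1 / 2) (n + 1) : ℝ) : ℂ) *
            (((x : ℂ) - Complex.I * ((n : ℂ) + 1)) ^ (-(2 * (m : ℤ) + 1)) +
              ((x : ℂ) + Complex.I * ((n : ℂ) + 1)) ^ (-(2 * (m : ℤ) + 1))) := by
  have hπ := Real.pi_pos
  have hc : 0 < 2 * π * x := by positivity
  have h := main_identity m (2 * π * x) hc
  rw [left_sum m x hx, right_sum m x hx, EE_integral (2 * m) _ hc] at h
  have z1 : (-(((2 * m : ℕ) + 1 / 2 : ℝ) : ℂ)) = -1 / 2 - 2 * (m : ℂ) := by push_cast; ring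
  have h2 : (√2 : ℂ) ≠ 0 := by exact_mod_cast (Real.sqrt_pos.2 (by norm_num : (0 : ℝ) < 2)).ne'
  have c1 : 2 * √(π * (2 * π * x)) = √2 * (2 * π * √x) := by
    rw [show π * (2 * π * x) = π ^ 2 * (2 * x) by ring, Real.sqrt_mul (by positivity),
      Real.sqrt_sq hπ.le, Real.sqrt_mul (by norm_num)]
    ring
  have c2 : √π * ((2 * m).factorial : ℝ) / (2 * π) ^ (2 * (m : ℝ) + 3 / 2) =
      ((2 * m).factorial : ℝ) * ((2 * π) ^ (2 * m + 1))⁻¹ / √2 := by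
    rw [show 2 * (m : ℝ) + 3 / 2 = ((2 * m + 1 : ℕ) : ℝ) + 1 / 2 by push_cast; ring,
      Real.rpow_add (by positivity), Real.rpow_natCast, ← Real.sqrt_eq_rpow,
      Real.sqrt_mul (by norm_num)]
    have : √π ≠ 0 := (Real.sqrt_pos.2 hπ).ne'
    field_simp
  rw [z1, c1] at h
  rw [c2]
  apply mul_left_cancel₀ h2
  rw [h]
  generalize (∑' n : ℕ, ((rsigma (2 * m + 1 / 2) (n + 1) : ℝ) : ℂ) *
            (((x : ℂ) - Complex.I * ((n : ℂ) + 1)) ^ (-(2 * (m : ℤ) + 1)) +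
              ((x : ℂ) + Complex.I * ((n : ℂ) + 1)) ^ (-(2 * (m : ℤ) + 1)))) = S
  generalize riemannZeta (-1 / 2 - 2 * (m : ℂ)) = Z1
  generalize riemannZeta (1 / 2) = Z2
  generalize riemannZeta (-2 * (m : ℂ)) = Z3
  have hxc : (x : ℂ) ≠ 0 := by exact_mod_cast hx.ne'
  have hπc : (π : ℂ) ≠ 0 := by exact_mod_cast hπ.ne'
  push_cast
  field_simp
  ring
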